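/- arXiv:0907.3164 — 3 statements merged into one kernel-verified Lean document; each statement's English description precedes it below -/
import Mathlib

section
/- Let M be a smooth compact Riemannian manifold of dimension n with geodesic distance d and Riemannian measure μ, and let a > 1. Then there exists a constant C₃ > 0 as follows. For each j ∈ ℤ, write M as a finite disjoint union of measurable subsets {E_{j,k} : 1 ≤ k ≤ N_j}, each of diameter less than a^j, and select x_{j,k} ∈ E_{j,k}. Suppose {Φ_{j,k}} and {Ψ_{j,k}} are two systems of functions with Φ_{j,k}, Ψ_{j,k} ∈ 𝒩_{x_{j,k}, a^j} for all j, k, and suppose 0 ≤ J ≤ 1. Then for all x, y ∈ M with x ≠ y, ∑_{j∈ℤ} ∑_{k=1}^{N_j} a^{−jJ} μ(E_{j,k}) |Φ_{j,k}(x) Ψ_{j,k}(y)| ≤ C₃ d(x,y)^{−n−J}. -/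
open Metric Manifold MeasureTheory

noncomputable section

/-- The class `𝒩_{x,t}` of smooth functions `Φ` on `M` with
`tⁿ |(d(x,y)/t)^N Φ(y)| ≤ 1` for all `y ∈ M` and `0 ≤ N ≤ n+2`. -/
def NClass (n : ℕ) {M : Type*} [MetricSpace M]
    [ChartedSpace (EuclideanSpace ℝ (Fin n)) M]
    (x : M) (t : ℝ) : Set (M → ℂ) :=
  {Φ | ContMDiff (𝓡 n) 𝓘(ℝ, ℂ) (⊤ : ℕ∞) Φ ∧
    ∀ (y : M) (N : ℕ), N ≤ n + 2 → t ^ n * ((dist x y / t) ^ N * ‖Φ y‖) ≤ 1}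

section Helpers
open scoped ENNReal NNReal

lemma growth (n : ℕ)
    (M : Type*) [MetricSpace M] [CompactSpace M]
    [ChartedSpace (EuclideanSpace ℝ (Fin n)) M] 
    [MeasurableSpace M] [BorelSpace M]
    (hbilip : ∀ x : M, ∃ ε : ℝ, 0 < ε ∧ ∃ L : ℝ, 0 < L ∧
      ball x ε ⊆ (chartAt (EuclideanSpace ℝ (Fin n)) x).source ∧
      ∀ y ∈ ball x ε, ∀ z ∈ ball x ε,
        (1 / L) * ‖chartAt (EuclideanSpace ℝ (Fin n)) x y -
            chartAt (EuclideanSpace ℝ (Fin n)) x z‖ ≤ dist y z ∧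
        dist y z ≤ L * ‖chartAt (EuclideanSpace ℝ (Fin n)) x y -
            chartAt (EuclideanSpace ℝ (Fin n)) x z‖) :
    ∃ C : ℝ, 0 < C ∧ ∀ (y : M) (r : ℝ), 0 < r →
      (μH[(n : ℝ)] : Measure M) (closedBall y r) ≤ ENNReal.ofReal (C * r ^ n) := by
  have key : ∃ C : ℝ, 0 < C ∧ ∃ δ : ℝ, 0 < δ ∧ ∀ y ∈ (Set.univ : Set M), ∀ r, 0 < r → r < δ →
      (μH[(n : ℝ)] : Measure M) (closedBall y r) ≤ ENNReal.ofReal (C * r ^ n) := by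
    refine isCompact_univ.induction_on (p := fun s => ∃ C : ℝ, 0 < C ∧ ∃ δ : ℝ, 0 < δ ∧
      ∀ y ∈ s, ∀ r, 0 < r → r < δ →
      (μH[(n : ℝ)] : Measure M) (closedBall y r) ≤ ENNReal.ofReal (C * r ^ n)) ?_ ?_ ?_ ?_
    · exact ⟨1, one_pos, 1, one_pos, by simp⟩
    · rintro s t hst ⟨C, hC, δ, hδ, h⟩
      exact ⟨C, hC, δ, hδ, fun y hy => h y (hst hy)⟩
    · rintro s t ⟨C, hC, δ, hδ, h⟩ ⟨C', hC', δ', hδ', h'⟩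
      refine ⟨max C C', lt_max_of_lt_left hC, min δ δ', lt_min hδ hδ', ?_⟩
      rintro y (hy | hy) r hr hrd
      · refine (h y hy r hr (hrd.trans_le (min_le_left _ _))).trans ?_
        gcongr; exact le_max_left _ _
      · refine (h' y hy r hr (hrd.trans_le (min_le_right _ _))).trans ?_
        gcongr; exact le_max_right _ _
    · intro x _
      obtain ⟨ε, hε, L, hL, -, h⟩ := hbilip x
      set f := chartAt (EuclideanSpace ℝ (Fin n)) x with hf
      set ν : Measure (EuclideanSpace ℝ (Fin n)) := μH[(n : ℝ)] with hν
      have : ν.IsAddHaarMeasure := by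
        have := isAddHaarMeasure_hausdorffMeasure (E := EuclideanSpace ℝ (Fin n))
        rwa [finrank_euclideanSpace_fin] at this
      set B := (ν (ball 0 1)).toReal with hB
      have hBf : ν (ball 0 1) ≠ ⊤ := measure_ball_lt_top.ne
      have hB0 : 0 ≤ B := ENNReal.toReal_nonneg
      refine ⟨ball x (ε/2), mem_nhdsWithin_of_mem_nhds (ball_mem_nhds _ (by positivity)),
        L ^ n * (L ^ n * B) + 1, by positivity, ε/2, by positivity, ?_⟩
      intro y hy r hr hrε
      have hsub : closedBall y r ⊆ ball x ε := by
        intro z hz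
        rw [mem_ball] at *
        rw [mem_closedBall] at hz
        linarith [dist_triangle z y x]
      have hyε : y ∈ ball x ε := hsub (mem_closedBall_self hr.le)
      have hanti : AntilipschitzWith (Real.toNNReal L) (fun z : closedBall y r => f z) := by
        refine AntilipschitzWith.of_le_mul_dist fun z w => ?_
        rw [Real.coe_toNNReal _ hL.le, dist_eq_norm]
        exact (h z (hsub z.2) w (hsub w.2)).2
      have h1 := hanti.le_hausdorffMeasure_image (d := (n : ℝ)) (by positivity) Set.univ
      have h2 := (isometry_subtype_coe (s := closedBall y r)).hausdorffMeasure_image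
        (d := (n : ℝ)) (Or.inl (by positivity)) Set.univ
      rw [Set.image_univ, Subtype.range_coe] at h2
      rw [h2]
      refine h1.trans ?_
      have h3 : (fun z : closedBall y r => f z) '' Set.univ ⊆ closedBall (f y) (L * r) := by
        rintro _ ⟨z, -, rfl⟩
        have := (h z (hsub z.2) y hyε).1
        rw [mem_closedBall, dist_eq_norm]
        have hz := mem_closedBall.1 z.2
        rw [one_div, inv_mul_le_iff₀ hL] at this
        exact this.trans (by gcongr)
      calc _ ≤ ((Real.toNNReal L : ℝ≥0∞)) ^ (n : ℝ) * ν (closedBall (f y) (L * r)) := by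
            gcongr
        _ = ENNReal.ofReal (L ^ n * ((L * r) ^ n * B)) := by
            rw [Measure.addHaar_closedBall _ _ (by positivity), finrank_euclideanSpace_fin,
              ENNReal.rpow_natCast, ENNReal.ofReal_mul (by positivity),
              ENNReal.ofReal_mul (by positivity), hB, ENNReal.ofReal_toReal hBf,
              ENNReal.ofReal_pow hL.le]
            rfl
        _ ≤ _ := by
            apply ENNReal.ofReal_le_ofReal
            have : 0 < r ^ n := by positivity
            rw [mul_pow]; nlinarith
  obtain ⟨C, hC, δ, hδ, h⟩ := key
  have hfin : (μH[(n : ℝ)] : Measure M) Set.univ ≠ ⊤ := by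
    refine (isCompact_univ.measure_lt_top_of_nhdsWithin fun x _ => ?_).ne
    refine ⟨closedBall x (δ/2), mem_nhdsWithin_of_mem_nhds (closedBall_mem_nhds _ (by positivity)), ?_⟩
    exact (h x trivial (δ/2) (by positivity) (by linarith)).trans_lt ENNReal.ofReal_lt_top
  set V := ((μH[(n : ℝ)] : Measure M) Set.univ).toReal
  have hV : 0 ≤ V := ENNReal.toReal_nonneg
  refine ⟨C + V / δ ^ n, by positivity, fun y r hr => ?_⟩
  by_cases hrd : r < δ
  · refine (h y trivial r hr hrd).trans ?_
    gcongr; simp; positivity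
  · refine (measure_mono (Set.subset_univ _)).trans ?_
    rw [← ENNReal.ofReal_toReal hfin]
    apply ENNReal.ofReal_le_ofReal
    have : δ ^ n ≤ r ^ n := by gcongr; linarith
    calc V = V / δ ^ n * δ ^ n := by field_simp
      _ ≤ V / δ ^ n * r ^ n := by gcongr
      _ ≤ _ := by gcongr; linarith

lemma near (n : ℕ) {M : Type*} [MetricSpace M] [CompactSpace M] [MeasurableSpace M]
    (μ : Measure M) (C : ℝ) (hC : 0 < C) (hμ : ∀ (y : M) (r : ℝ), 0 < r →
      μ (closedBall y r) ≤ ENNReal.ofReal (C * r ^ n)) :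
    ∃ D : ℝ, 0 < D ∧ ∀ (t : ℝ), 0 < t → ∀ (N : ℕ) (E : Fin N → Set M),
      (∀ k, MeasurableSet (E k)) → (Pairwise fun k k' => Disjoint (E k) (E k')) →
      (∀ k, Metric.diam (E k) < t) → ∀ xp : Fin N → M, (∀ k, xp k ∈ E k) →
      ∀ (y : M) (ψ : Fin N → ℝ), (∀ k, 0 ≤ ψ k) →
      (∀ k, ∀ m ≤ n + 2, t ^ n * ((dist (xp k) y / t) ^ m * ψ k) ≤ 1) →
      ∑ k, μ (E k) * ENNReal.ofReal (ψ k) ≤ ENNReal.ofReal D := by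
  have hsum : Summable fun m : ℕ => (2 : ℝ) ^ (n + 2) * C * 2 ^ n * (1 / ((m : ℝ) + 1) ^ 2) := by
    apply Summable.mul_left
    have := (summable_nat_add_iff 1).2 (Real.summable_one_div_nat_pow.2 (one_lt_two))
    simpa using this
  refine ⟨∑' m : ℕ, (2 : ℝ) ^ (n + 2) * C * 2 ^ n * (1 / ((m : ℝ) + 1) ^ 2),
    hsum.tsum_pos (fun m => by positivity) 0 (by positivity), ?_⟩
  intro t ht N E hE hdis hdiam xp hxp y ψ hψ hb
  set fl : Fin N → ℕ := fun k => ⌊dist (xp k) y / t⌋₊ with hfl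
  set W : ℕ → ℝ := fun m => 2 ^ (n + 2) / ((m + 1) ^ (n + 2) * t ^ n) with hW
  have hψW : ∀ k, ψ k ≤ W (fl k) := by
    intro k
    have hm : (fl k : ℝ) ≤ dist (xp k) y / t := Nat.floor_le (by positivity)
    have h0 := hb k 0 (by omega)
    have h1 := hb k (n + 2) le_rfl
    have h1' : t ^ n * ((fl k : ℝ) ^ (n + 2) * ψ k) ≤ 1 := by
      refine le_trans ?_ h1
      have := hψ k
      gcongr
    rw [hW]
    simp only
    rw [le_div_iff₀ (by positivity)]
    rw [pow_zero, one_mul] at h0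
    rcases Nat.eq_zero_or_pos (fl k) with h | h
    · rw [h]
      have : (1 : ℝ) ≤ 2 ^ (n + 2) := one_le_pow₀ (by norm_num)
      simp only [Nat.cast_zero, zero_add, one_pow, one_mul]
      linarith
    · have h2 : ((fl k : ℝ) + 1) ≤ 2 * fl k := by
        have : (1 : ℝ) ≤ fl k := by exact_mod_cast h
        linarith
      have := hψ k
      calc ψ k * (((fl k : ℝ) + 1) ^ (n + 2) * t ^ n) ≤ ψ k * ((2 * fl k) ^ (n + 2) * t ^ n) := by
            gcongr
        _ = 2 ^ (n + 2) * (t ^ n * ((fl k : ℝ) ^ (n + 2) * ψ k)) := by rw [mul_pow]; ring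
        _ ≤ 2 ^ (n + 2) * 1 := by gcongr
        _ = _ := mul_one _
  have hann : ∀ m : ℕ, ∑ k with fl k = m, μ (E k) ≤ ENNReal.ofReal (C * (((m : ℝ) + 2) * t) ^ n) := by
    intro m
    rw [← measure_biUnion_finset (fun k _ k' _ hkk => hdis hkk) (fun k _ => hE k)]
    refine (measure_mono ?_).trans (hμ y _ (by positivity))
    intro z hz
    simp only [Finset.mem_filter, Finset.mem_univ, true_and, Set.mem_iUnion, exists_prop] at hz
    obtain ⟨k, hk, hz⟩ := hz
    have h1 : dist z (xp k) ≤ diam (E k) :=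
      dist_le_diam_of_mem (isCompact_univ.isBounded.subset (Set.subset_univ _)) hz (hxp k)
    have h2 : dist (xp k) y / t < m + 1 := by
      rw [← hk]; exact Nat.lt_floor_add_one _
    rw [div_lt_iff₀ ht] at h2
    rw [mem_closedBall]
    nlinarith [dist_triangle z (xp k) y, hdiam k]
  calc ∑ k, μ (E k) * ENNReal.ofReal (ψ k) 
      ≤ ∑ k, μ (E k) * ENNReal.ofReal (W (fl k)) := by
        gcongr with k; exact hψW k
    _ = ∑ k, ∑' m : ℕ, if fl k = m then μ (E k) * ENNReal.ofReal (W m) else 0 := by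
        congr 1; ext k; rw [tsum_eq_single (fl k)]
        · simp
        · intro m hm; rw [if_neg hm.symm]
    _ = ∑' m : ℕ, ∑ k, if fl k = m then μ (E k) * ENNReal.ofReal (W m) else 0 := by
        rw [Summable.tsum_finsetSum]; intros; exact ENNReal.summable
    _ = ∑' m : ℕ, (∑ k with fl k = m, μ (E k)) * ENNReal.ofReal (W m) := by
        congr 1; ext m; rw [← Finset.sum_filter, Finset.sum_mul]
    _ ≤ ∑' m : ℕ, ENNReal.ofReal ((2 : ℝ) ^ (n + 2) * C * 2 ^ n * (1 / ((m : ℝ) + 1) ^ 2)) := by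
        refine ENNReal.tsum_le_tsum fun m => ?_
        refine (mul_le_mul_left (hann m) _).trans ?_
        rw [← ENNReal.ofReal_mul (by positivity)]
        apply ENNReal.ofReal_le_ofReal
        have : ((m : ℝ) + 2) ≤ 2 * (m + 1) := by linarith [(Nat.cast_nonneg m : (0:ℝ) ≤ m)]
        calc C * (((m : ℝ) + 2) * t) ^ n * W m ≤ C * ((2 * (m + 1)) * t) ^ n * W m := by
              gcongr
          _ = _ := by
              rw [hW]; simp only [mul_pow]; field_simp; ring
    _ = _ := (ENNReal.ofReal_tsum_of_nonneg (fun m => by positivity) hsum).symm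

/-- the far factor -/
lemma far (n : ℕ) (hn : 1 ≤ n) (t d u p J : ℝ) (ht : 0 < t) (hd : 0 < d) (hu : d / 2 ≤ u) (hp : 0 ≤ p)
    (hJ : 0 ≤ J) (hJ1 : J ≤ 1)
    (hb : ∀ m ≤ n + 2, t ^ n * ((u / t) ^ m * p) ≤ 1) :
    t ^ (-J) * p ≤ 2 ^ (n + 2) * min (d / t) (t / d) * d ^ (-(n : ℝ) - J) := by
  set s := d / t with hs
  have hs0 : 0 < s := by positivity
  have hts : t / d = s⁻¹ := by rw [hs, inv_div]
  have hdst : d = s * t := by rw [hs]; field_simp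
  have h0 := hb 0 (by omega)
  have h1 := hb (n + 2) le_rfl
  rw [pow_zero, one_mul] at h0
  have h1' : s ^ (n + 2) * (t ^ n * p) ≤ 2 ^ (n + 2) := by
    have h2 : s ≤ 2 * (u / t) := by rw [hs, ← mul_div_assoc]; gcongr; linarith
    calc s ^ (n + 2) * (t ^ n * p) ≤ (2 * (u / t)) ^ (n + 2) * (t ^ n * p) := by gcongr
      _ = 2 ^ (n + 2) * (t ^ n * ((u / t) ^ (n + 2) * p)) := by rw [mul_pow]; ring
      _ ≤ 2 ^ (n + 2) * 1 := by gcongr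
      _ = _ := mul_one _
  have hone : (1 : ℝ) ≤ 2 ^ (n + 2) := one_le_pow₀ (by norm_num)
  have main : s ^ ((n : ℝ) + J) * (t ^ n * p) ≤ 2 ^ (n + 2) * min s s⁻¹ := by
    have hq : 0 ≤ t ^ n * p := by positivity
    rcases le_total s 1 with hs1 | hs1
    · rw [min_eq_left (hs1.trans ((one_le_inv₀ hs0).2 hs1))]
      have : s ^ ((n : ℝ) + J) ≤ s := by
        have h := Real.rpow_le_rpow_of_exponent_ge hs0 hs1 (show (1 : ℝ) ≤ (n : ℝ) + J by
          have : (1 : ℝ) ≤ n := by exact_mod_cast hn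
          linarith)
        rwa [Real.rpow_one] at h
      calc _ ≤ s * 1 := by gcongr
        _ ≤ _ := by nlinarith
    · rw [min_eq_right ((inv_le_one_of_one_le₀ hs1).trans hs1)]
      have : s ^ ((n : ℝ) + J) ≤ s ^ (n + 1) := by
        rw [← Real.rpow_natCast]
        exact Real.rpow_le_rpow_of_exponent_le hs1 (by push_cast; linarith)
      calc _ ≤ s ^ (n + 1) * (t ^ n * p) := by gcongr
        _ = s ^ (n + 2) * (t ^ n * p) * s⁻¹ := by field_simp; ring
        _ ≤ _ := by gcongr
  have hdd : 0 < d ^ (-(n : ℝ) - J) := by positivity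
  have e : t ^ (-J) = s ^ ((n : ℝ) + J) * t ^ n * d ^ (-(n : ℝ) - J) := by
    rw [show -(n : ℝ) - J = -((n : ℝ) + J) by ring, Real.rpow_neg hd.le, hs,
      Real.div_rpow hd.le ht.le, Real.rpow_add ht, Real.rpow_natCast, Real.rpow_neg ht.le]
    field_simp
  rw [e, hts]
  calc _ = s ^ ((n : ℝ) + J) * (t ^ n * p) * d ^ (-(n : ℝ) - J) := by ring
    _ ≤ _ := by gcongr

lemma geom (a : ℝ) (ha : 1 < a) : ∃ G : ℝ, 0 < G ∧ ∀ d : ℝ, 0 < d →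
    ∑' j : ℤ, ENNReal.ofReal (min (d / a ^ j) (a ^ j / d)) ≤ ENNReal.ofReal G := by
  have ha0 : 0 < a := by linarith
  have hg : Summable fun m : ℕ => (a⁻¹) ^ m :=
    summable_geometric_of_lt_one (by positivity) (inv_lt_one_of_one_lt₀ ha)
  have hsum : Summable fun j : ℤ => a * (a⁻¹) ^ j.natAbs := by
    apply Summable.mul_left
    apply Summable.of_nat_of_neg <;> simpa using hg
  refine ⟨∑' j : ℤ, a * (a⁻¹) ^ j.natAbs, hsum.tsum_pos (fun m => by positivity) 0 (by positivity), ?_⟩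
  intro d hd
  obtain ⟨j0, hj0, hj1⟩ := exists_mem_Ico_zpow hd ha
  rw [ENNReal.ofReal_tsum_of_nonneg (fun j => by positivity) hsum,
    ← (Equiv.addRight j0).tsum_eq]
  refine ENNReal.tsum_le_tsum fun j => ENNReal.ofReal_le_ofReal ?_
  simp only [Equiv.coe_addRight]
  rcases le_total 0 j with hj | hj
  · refine (min_le_left _ _).trans ?_
    rw [div_le_iff₀ (by positivity)]
    refine hj1.le.trans (le_of_eq ?_)
    lift j to ℕ using hj
    rw [zpow_add₀ ha0.ne', zpow_add₀ ha0.ne', zpow_one]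
    simp
    field_simp
  · refine (min_le_right _ _).trans ?_
    rw [div_le_iff₀ (by positivity)]
    obtain ⟨m, rfl⟩ : ∃ m : ℕ, j = -(m : ℤ) := ⟨j.natAbs, by omega⟩
    rw [zpow_add₀ ha0.ne']
    simp only [zpow_neg, zpow_natCast, Int.natAbs_neg, Int.natAbs_natCast]
    rw [inv_pow]
    have : 0 < (a ^ m)⁻¹ := by positivity
    calc _ ≤ (a ^ m)⁻¹ * d := by gcongr
      _ ≤ a * ((a ^ m)⁻¹ * d) := le_mul_of_one_le_left (by positivity) ha.le
      _ = _ := by ring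

end Helpers

/-- **Near-diagonal summation estimate.**  On a smooth compact Riemannian
`n`-manifold `M`, given `a > 1`, there is `C₃ > 0` such that: for any partitions
`{E_{j,k}}` of `M` (for `j ∈ ℤ`) into finitely many measurable pieces of diameter
`< a^j`, points `x_{j,k} ∈ E_{j,k}`, functions `Φ_{j,k}, Ψ_{j,k} ∈ 𝒩_{x_{j,k},a^j}`
and `0 ≤ J ≤ 1`, one has for `x ≠ y`:
`∑_{j,k} a^{−jJ} μ(E_{j,k}) |Φ_{j,k}(x)Ψ_{j,k}(y)| ≤ C₃ d(x,y)^{−n−J}`. -/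
theorem statement_8 (n : ℕ) (hn : 1 ≤ n)
    (M : Type*) [MetricSpace M] [CompactSpace M]
    [ChartedSpace (EuclideanSpace ℝ (Fin n)) M] [IsManifold (𝓡 n) (⊤ : ℕ∞) M]
    [MeasurableSpace M] [BorelSpace M]
    -- the geodesic distance is locally bi-Lipschitz comparable to chart coordinates
    (hbilip : ∀ x : M, ∃ ε : ℝ, 0 < ε ∧ ∃ L : ℝ, 0 < L ∧
      ball x ε ⊆ (chartAt (EuclideanSpace ℝ (Fin n)) x).source ∧
      ∀ y ∈ ball x ε, ∀ z ∈ ball x ε,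
        (1 / L) * ‖chartAt (EuclideanSpace ℝ (Fin n)) x y -
            chartAt (EuclideanSpace ℝ (Fin n)) x z‖ ≤ dist y z ∧
        dist y z ≤ L * ‖chartAt (EuclideanSpace ℝ (Fin n)) x y -
            chartAt (EuclideanSpace ℝ (Fin n)) x z‖)
    -- the Riemannian measure is the `n`-dimensional Hausdorff measure of `d`
    (μ : Measure M) (hμ : μ = μH[(n : ℝ)])
    (a : ℝ) (ha : 1 < a) :
    ∃ C₃ : ℝ, 0 < C₃ ∧
      ∀ (N : ℤ → ℕ) (E : (j : ℤ) → Fin (N j) → Set M),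
        (∀ j k, MeasurableSet (E j k)) →
        (∀ j, Pairwise fun k k' => Disjoint (E j k) (E j k')) →
        (∀ j, (⋃ k, E j k) = Set.univ) →
        (∀ j k, Metric.diam (E j k) < a ^ j) →
        ∀ (xp : (j : ℤ) → Fin (N j) → M), (∀ j k, xp j k ∈ E j k) →
        ∀ (Φ Ψ : (j : ℤ) → Fin (N j) → (M → ℂ)),
          (∀ j k, Φ j k ∈ NClass n (xp j k) (a ^ j)) →
          (∀ j k, Ψ j k ∈ NClass n (xp j k) (a ^ j)) →
        ∀ J : ℝ, 0 ≤ J → J ≤ 1 →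
        ∀ x y : M, x ≠ y →
          ∑' p : (j : ℤ) × Fin (N j),
              ENNReal.ofReal (a ^ (-(p.1 : ℝ) * J) * ((μ (E p.1 p.2)).toReal *
                (‖Φ p.1 p.2 x‖ * ‖Ψ p.1 p.2 y‖))) ≤
            ENNReal.ofReal (C₃ * dist x y ^ (-(n : ℝ) - J)) := by
  subst hμ
  obtain ⟨C, hC, hgrow⟩ := growth n M hbilip
  obtain ⟨D, hD, hnear⟩ := near n (μH[(n : ℝ)] : Measure M) C hC hgrow
  obtain ⟨G, hG, hgeom⟩ := geom a ha
  have ha0 : 0 < a := by linarith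
  refine ⟨2 ^ (n + 2) * (2 * D) * G, by positivity, ?_⟩
  intro N E hE hdis _ hdiam xp hxp Φ Ψ hΦ hΨ J hJ hJ1 x y hxy
  have hd : 0 < dist x y := dist_pos.2 hxy
  set d := dist x y with hd_def
  set P := d ^ (-(n : ℝ) - J) with hP
  have hP0 : 0 < P := by positivity
  set μ : Measure M := μH[(n : ℝ)]
  have hterm : ∀ (j : ℤ) (k : Fin (N j)),
      ENNReal.ofReal (a ^ (-(j : ℝ) * J) * ((μ (E j k)).toReal * (‖Φ j k x‖ * ‖Ψ j k y‖))) ≤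
      ENNReal.ofReal (2 ^ (n + 2) * min (d / a ^ j) (a ^ j / d) * P) *
        (μ (E j k) * ENNReal.ofReal ‖Φ j k x‖ + μ (E j k) * ENNReal.ofReal ‖Ψ j k y‖) := by
    intro j k
    have ht : 0 < a ^ j := by positivity
    have he : a ^ (-(j : ℝ) * J) = (a ^ j) ^ (-J) := by
      rw [← Real.rpow_intCast, ← Real.rpow_mul ha0.le]; congr 1; ring
    rw [he]
    set q := 2 ^ (n + 2) * min (d / a ^ j) (a ^ j / d) * P with hq
    have hq0 : 0 ≤ q := by positivity
    have hm : ENNReal.ofReal (μ (E j k)).toReal ≤ μ (E j k) := ENNReal.ofReal_toReal_le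
    have htri : d ≤ dist (xp j k) x + dist (xp j k) y := by
      rw [hd_def, dist_comm (xp j k) x]; exact dist_triangle _ _ _
    have hcase : d / 2 ≤ dist (xp j k) x ∨ d / 2 ≤ dist (xp j k) y := by
      by_contra! h; linarith [h.1, h.2]
    rcases hcase with h | h
    · have hf := far n hn (a ^ j) d _ ‖Φ j k x‖ J ht hd h (norm_nonneg _) hJ hJ1
        ((hΦ j k).2 x)
      calc _ ≤ ENNReal.ofReal (q * ((μ (E j k)).toReal * ‖Ψ j k y‖)) := by
            apply ENNReal.ofReal_le_ofReal
            calc _ = ((a ^ j) ^ (-J) * ‖Φ j k x‖) * ((μ (E j k)).toReal * ‖Ψ j k y‖) := by ring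
              _ ≤ _ := by gcongr
        _ = ENNReal.ofReal q *
            (ENNReal.ofReal (μ (E j k)).toReal * ENNReal.ofReal ‖Ψ j k y‖) := by
            rw [ENNReal.ofReal_mul hq0, ENNReal.ofReal_mul ENNReal.toReal_nonneg]
        _ ≤ ENNReal.ofReal q * (μ (E j k) * ENNReal.ofReal ‖Ψ j k y‖) := by gcongr
        _ ≤ _ := by gcongr; exact le_add_self
    · have hf := far n hn (a ^ j) d _ ‖Ψ j k y‖ J ht hd h (norm_nonneg _) hJ hJ1
        ((hΨ j k).2 y)
      calc _ ≤ ENNReal.ofReal (q * ((μ (E j k)).toReal * ‖Φ j k x‖)) := by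
            apply ENNReal.ofReal_le_ofReal
            calc _ = ((a ^ j) ^ (-J) * ‖Ψ j k y‖) * ((μ (E j k)).toReal * ‖Φ j k x‖) := by ring
              _ ≤ _ := by gcongr
        _ = ENNReal.ofReal q *
            (ENNReal.ofReal (μ (E j k)).toReal * ENNReal.ofReal ‖Φ j k x‖) := by
            rw [ENNReal.ofReal_mul hq0, ENNReal.ofReal_mul ENNReal.toReal_nonneg]
        _ ≤ ENNReal.ofReal q * (μ (E j k) * ENNReal.ofReal ‖Φ j k x‖) := by gcongr
        _ ≤ _ := by gcongr; exact le_self_add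
  rw [ENNReal.tsum_sigma']
  have hj : ∀ j : ℤ, ∑' k : Fin (N j),
      ENNReal.ofReal (a ^ (-(j : ℝ) * J) * ((μ (E j k)).toReal * (‖Φ j k x‖ * ‖Ψ j k y‖))) ≤
      ENNReal.ofReal (2 ^ (n + 2) * (2 * D) * P) *
        ENNReal.ofReal (min (d / a ^ j) (a ^ j / d)) := by
    intro j
    have ht : 0 < a ^ j := by positivity
    rw [tsum_fintype]
    refine (Finset.sum_le_sum fun k _ => hterm j k).trans ?_
    rw [← Finset.mul_sum, Finset.sum_add_distrib]
    have h1 := hnear (a ^ j) ht (N j) (E j) (hE j) (hdis j) (hdiam j) (xp j) (hxp j) x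
      (fun k => ‖Φ j k x‖) (fun k => norm_nonneg _) (fun k => (hΦ j k).2 x)
    have h2 := hnear (a ^ j) ht (N j) (E j) (hE j) (hdis j) (hdiam j) (xp j) (hxp j) y
      (fun k => ‖Ψ j k y‖) (fun k => norm_nonneg _) (fun k => (hΨ j k).2 y)
    refine (mul_le_mul_right (add_le_add h1 h2) _).trans (le_of_eq ?_)
    rw [← ENNReal.ofReal_add hD.le hD.le, ← ENNReal.ofReal_mul (by positivity),
      ← ENNReal.ofReal_mul (by positivity)]
    congr 1; ring
  refine (ENNReal.tsum_le_tsum hj).trans ?_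
  rw [ENNReal.tsum_mul_left]
  refine (mul_le_mul_right (hgeom d hd) _).trans (le_of_eq ?_)
  rw [← ENNReal.ofReal_mul (by positivity)]
  congr 1; ring
end
end

section
/- Let M be a smooth compact Riemannian manifold of dimension n with geodesic distance d and Riemannian measure μ, let a > 1, and let {E_{j,k}}, {x_{j,k}}, {Φ_{j,k}}, {Ψ_{j,k}} and 0 ≤ J ≤ 1 be as follows: for each j ∈ ℤ, {E_{j,k} : 1 ≤ k ≤ N_j} is a finite disjoint measurable partition of M with each E_{j,k} of diameter less than a^j, x_{j,k} ∈ E_{j,k}, and Φ_{j,k}, Ψ_{j,k} ∈ 𝒩_{x_{j,k}, a^j}. Then for every η > 0, the series ∑_{j∈ℤ} ∑_{k=1}^{N_j} a^{−jJ} μ(E_{j,k}) |Φ_{j,k}(x) Ψ_{j,k}(y)| converges uniformly on the set {(x,y) ∈ M × M : d(x,y) ≥ η}. -/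
open Metric Manifold MeasureTheory

noncomputable section

/-- Local volume estimate from one bi-Lipschitz chart. -/
theorem local_growth (n : ℕ) {M : Type*} [MetricSpace M] [MeasurableSpace M] [BorelSpace M]
    (f : M → EuclideanSpace ℝ (Fin n)) (x : M) (ε L : ℝ) (hL : 0 < L)
    (h : ∀ y ∈ ball x ε, ∀ z ∈ ball x ε,
        (1 / L) * ‖f y - f z‖ ≤ dist y z ∧ dist y z ≤ L * ‖f y - f z‖) :
    ∃ C : ℝ, 0 ≤ C ∧ ∀ y ∈ ball x (ε / 2), ∀ r : ℝ, 0 < r → r ≤ ε / 2 →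
      (μH[(n : ℝ)] : Measure M) (ball y r) ≤ ENNReal.ofReal (C * r ^ n) := by
  set ν : Measure (EuclideanSpace ℝ (Fin n)) := μH[(n : ℝ)] with hν
  have hfin : ν (ball 0 1) ≠ ⊤ := measure_ball_lt_top.ne
  refine ⟨L ^ n * (L ^ n * 2 ^ n * (ν (ball 0 1)).toReal), by positivity, ?_⟩
  intro y hy r hr hr2
  have hsub : ball y r ⊆ ball x ε := by
    intro z hz
    rw [mem_ball] at *
    linarith [dist_triangle z y x]
  have : Nonempty M := ⟨x⟩
  have hinj : Set.InjOn f (ball y r) := by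
    intro z hz w hw hzw
    have := (h z (hsub hz) w (hsub hw)).2
    rw [hzw, sub_self, norm_zero, mul_zero] at this
    exact dist_le_zero.1 this
  have hleft := hinj.leftInvOn_invFunOn
  set g := Function.invFunOn f (ball y r)
  have hlip : LipschitzOnWith L.toNNReal g (f '' ball y r) := by
    apply LipschitzOnWith.of_dist_le_mul
    rintro _ ⟨z, hz, rfl⟩ _ ⟨w, hw, rfl⟩
    rw [hleft hz, hleft hw, dist_eq_norm, Real.coe_toNNReal L hL.le]
    exact (h z (hsub hz) w (hsub hw)).2
  have himg : g '' (f '' ball y r) = ball y r := hleft.image_image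
  have h1 := hlip.hausdorffMeasure_image_le (d := (n : ℝ)) (by positivity)
  rw [himg] at h1
  have hsub2 : f '' ball y r ⊆ ball (f y) (L * 2 * r) := by
    rintro _ ⟨z, hz, rfl⟩
    have := (h z (hsub hz) y (hsub (mem_ball_self hr))).1
    rw [mem_ball] at *
    rw [dist_eq_norm]
    rw [one_div, inv_mul_le_iff₀ hL] at this
    nlinarith
  have h2 : ν (ball (f y) (L * 2 * r)) = ENNReal.ofReal ((L * 2 * r) ^ n) * ν (ball 0 1) := by
    have := Measure.addHaar_ball_of_pos ν (f y) (r := L * 2 * r) (by positivity)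
    rwa [finrank_euclideanSpace_fin] at this
  refine h1.trans ((mul_le_mul_right ((measure_mono hsub2).trans h2.le) _).trans ?_)
  have e1 : (L.toNNReal : ENNReal) ^ (n : ℝ) = ENNReal.ofReal (L ^ n) := by
    rw [ENNReal.rpow_natCast, ENNReal.ofReal_pow hL.le, ENNReal.ofReal]
  rw [e1, ← ENNReal.ofReal_toReal hfin, ← ENNReal.ofReal_mul (by positivity),
    ← ENNReal.ofReal_mul (by positivity)]
  apply ENNReal.ofReal_le_ofReal
  rw [ENNReal.toReal_ofReal ENNReal.toReal_nonneg]
  apply le_of_eq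
  ring

theorem global_growth (n : ℕ) {M : Type*} [MetricSpace M] [CompactSpace M]
    [MeasurableSpace M] (μ : Measure M)
    (h : ∀ x : M, ∃ ε : ℝ, 0 < ε ∧ ∃ C : ℝ, 0 ≤ C ∧ ∀ y ∈ ball x ε, ∀ r : ℝ, 0 < r → r ≤ ε →
      μ (ball y r) ≤ ENNReal.ofReal (C * r ^ n)) :
    IsFiniteMeasure μ ∧ ∃ C : ℝ, 0 ≤ C ∧ ∀ (y : M) (r : ℝ), 0 < r →
      μ.real (ball y r) ≤ C * r ^ n := by
  have hfin : IsFiniteMeasure μ := by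
    constructor
    apply isCompact_univ.measure_lt_top_of_nhdsWithin
    intro x _
    obtain ⟨ε, hε, C, hC, hh⟩ := h x
    refine ⟨ball x ε, mem_nhdsWithin_of_mem_nhds (ball_mem_nhds x hε), ?_⟩
    exact (hh x (mem_ball_self hε) ε hε le_rfl).trans_lt ENNReal.ofReal_lt_top
  refine ⟨hfin, ?_⟩
  have key : ∃ δ : ℝ, 0 < δ ∧ ∃ C : ℝ, 0 ≤ C ∧ ∀ y ∈ (Set.univ : Set M), ∀ r : ℝ, 0 < r → r ≤ δ →
      μ.real (ball y r) ≤ C * r ^ n := by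
    refine isCompact_univ.induction_on (p := fun s => ∃ δ : ℝ, 0 < δ ∧ ∃ C : ℝ, 0 ≤ C ∧
      ∀ y ∈ s, ∀ r : ℝ, 0 < r → r ≤ δ → μ.real (ball y r) ≤ C * r ^ n) ?_ ?_ ?_ ?_
    · exact ⟨1, one_pos, 0, le_rfl, by simp⟩
    · rintro s t hst ⟨δ, hδ, C, hC, hh⟩
      exact ⟨δ, hδ, C, hC, fun y hy => hh y (hst hy)⟩
    · rintro s t ⟨δ, hδ, C, hC, hh⟩ ⟨δ', hδ', C', hC', hh'⟩
      refine ⟨min δ δ', lt_min hδ hδ', max C C', le_max_of_le_left hC, ?_⟩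
      rintro y (hy | hy) r hr hr'
      · refine (hh y hy r hr (hr'.trans (min_le_left _ _))).trans ?_
        gcongr
        exact le_max_left _ _
      · refine (hh' y hy r hr (hr'.trans (min_le_right _ _))).trans ?_
        gcongr
        exact le_max_right _ _
    · intro x _
      obtain ⟨ε, hε, C, hC, hh⟩ := h x
      refine ⟨ball x ε, mem_nhdsWithin_of_mem_nhds (ball_mem_nhds x hε), ε, hε, C, hC, ?_⟩
      intro y hy r hr hr'
      exact ENNReal.toReal_le_of_le_ofReal (by positivity) (hh y hy r hr hr')
  obtain ⟨δ, hδ, C, hC, hh⟩ := key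
  refine ⟨max C (μ.real Set.univ / δ ^ n), le_max_of_le_left hC, fun y r hr => ?_⟩
  rcases le_total r δ with hrd | hrd
  · refine (hh y trivial r hr hrd).trans ?_
    gcongr
    exact le_max_left _ _
  · calc μ.real (ball y r) ≤ μ.real Set.univ := measureReal_mono (Set.subset_univ _)
      _ = μ.real Set.univ / δ ^ n * δ ^ n := by field_simp
      _ ≤ μ.real Set.univ / δ ^ n * r ^ n := by gcongr
      _ ≤ _ := by
        gcongr
        exact le_max_right _ _

/-- Dyadic localization of a rapidly decaying value. -/
theorem dyadic_choice (n : ℕ) (d t f : ℝ) (ht : 0 < t)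
    (h0 : t ^ n * f ≤ 1) (h1 : t ^ n * ((d / t) ^ (n + 2) * f) ≤ 1) (hf : 0 ≤ f) :
    ∃ m : ℕ, d < 2 ^ m * t ∧ t ^ n * f ≤ 2 ^ (n + 2) * (1 / 2 ^ m) ^ (n + 2) := by
  rcases lt_or_ge d t with hd | hd
  · refine ⟨0, by simpa using hd, h0.trans ?_⟩
    simp only [pow_zero, div_one, one_pow, mul_one]
    exact one_le_pow₀ (by norm_num)
  · obtain ⟨m, hm1, hm2⟩ := exists_nat_pow_near (x := d / t) (y := 2) ((one_le_div ht).2 hd)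
      (by norm_num)
    refine ⟨m + 1, (div_lt_iff₀ ht).1 hm2, ?_⟩
    have e : (2 : ℝ) ^ (n + 2) * (1 / 2 ^ (m + 1)) ^ (n + 2) = 1 / (2 ^ m) ^ (n + 2) := by
      rw [← mul_pow, one_div_pow (2 ^ m : ℝ) (n+2) |>.symm]
      congr 1
      rw [pow_succ]
      field_simp
    rw [e, le_div_iff₀ (by positivity)]
    calc t ^ n * f * (2 ^ m) ^ (n + 2) ≤ t ^ n * f * (d / t) ^ (n + 2) := by gcongr
      _ = t ^ n * ((d / t) ^ (n + 2) * f) := by ring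
      _ ≤ 1 := h1

theorem scale_sum (n : ℕ) {M : Type*} [MetricSpace M] [MeasurableSpace M] (μ : Measure M)
    [IsFiniteMeasure μ] (C : ℝ) (hC : 0 ≤ C)
    (hgrow : ∀ (y : M) (r : ℝ), 0 < r → μ.real (ball y r) ≤ C * r ^ n)
    (N : ℕ) (E : Fin N → Set M) (hE : ∀ k, MeasurableSet (E k))
    (hdisj : Pairwise fun k k' => Disjoint (E k) (E k')) (t : ℝ) (ht : 0 < t)
    (xp : Fin N → M) (hxp : ∀ k, ∀ z ∈ E k, dist z (xp k) < t)
    (y : M) (f : Fin N → ℝ) (hf : ∀ k, 0 ≤ f k) (h0 : ∀ k, t ^ n * f k ≤ 1)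
    (h1 : ∀ k, t ^ n * ((dist (xp k) y / t) ^ (n + 2) * f k) ≤ 1) :
    ∑ k, μ.real (E k) * f k ≤ C * 2 ^ (2 * n + 3) := by
  choose m hm1 hm2 using fun k => dyadic_choice n (dist (xp k) y) t (f k) ht (h0 k) (h1 k) (hf k)
  have htn : 0 < t ^ n := by positivity
  rw [← mul_le_mul_iff_right₀ htn]
  set K := Finset.univ.sup m + 1
  have hmaps : ∀ k ∈ (Finset.univ : Finset (Fin N)), m k ∈ Finset.range K := by
    intro k hk
    exact Finset.mem_range.2 (Nat.lt_succ_of_le (Finset.le_sup hk))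
  calc t ^ n * ∑ k, μ.real (E k) * f k = ∑ k, μ.real (E k) * (t ^ n * f k) := by
        rw [Finset.mul_sum]
        exact Finset.sum_congr rfl fun _ _ => by ring
    _ ≤ ∑ k, μ.real (E k) * (2 ^ (n + 2) * (1 / 2 ^ m k) ^ (n + 2)) :=
        Finset.sum_le_sum fun k _ => mul_le_mul_of_nonneg_left (hm2 k) measureReal_nonneg
    _ = ∑ i ∈ Finset.range K, ∑ k with m k = i,
          μ.real (E k) * (2 ^ (n + 2) * (1 / 2 ^ m k) ^ (n + 2)) :=
        (Finset.sum_fiberwise_of_maps_to hmaps _).symm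
    _ ≤ ∑ i ∈ Finset.range K, C * 2 ^ (2 * n + 2) * t ^ n * (1 / 4) ^ i := by
        refine Finset.sum_le_sum fun i _ => ?_
        have e1 : ∑ k with m k = i, μ.real (E k) * (2 ^ (n + 2) * (1 / 2 ^ m k) ^ (n + 2))
            = (∑ k with m k = i, μ.real (E k)) * (2 ^ (n + 2) * (1 / 2 ^ i) ^ (n + 2)) := by
          rw [Finset.sum_mul]
          refine Finset.sum_congr rfl fun k hk => ?_
          rw [(Finset.mem_filter.1 hk).2]
        have e2 : ∑ k with m k = i, μ.real (E k) ≤ C * (2 ^ (i + 1) * t) ^ n := by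
          rw [← measureReal_biUnion_finset (fun a _ b _ hab => hdisj hab) (fun k _ => hE k)]
          refine (measureReal_mono ?_).trans (hgrow y _ (by positivity))
          intro z hz
          simp only [Set.mem_iUnion, Finset.mem_filter] at hz
          obtain ⟨k, ⟨_, hk⟩, hzk⟩ := hz
          have a1 := hxp k z hzk
          have a2 := hm1 k
          rw [hk] at a2
          have a3 : (1 : ℝ) ≤ 2 ^ i := one_le_pow₀ (by norm_num)
          rw [mem_ball, pow_succ]
          nlinarith [dist_triangle z (xp k) y]
        rw [e1]
        refine (mul_le_mul_of_nonneg_right e2 (by positivity)).trans (le_of_eq ?_)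
        have e4 : (1 / 4 : ℝ) ^ i = (1 / 2 ^ i) ^ 2 := by
          rw [div_pow, div_pow, one_pow, one_pow, ← pow_mul, mul_comm i 2, pow_mul]; norm_num
        have e5 : (2 ^ i : ℝ) ^ n * (1 / 2 ^ i) ^ n = 1 := by
          rw [← mul_pow, mul_one_div_cancel (by positivity), one_pow]
        rw [e4, pow_add (1 / 2 ^ i : ℝ) n 2, mul_pow, pow_succ, mul_pow]
        calc _ = C * 2 ^ (2 * n + 2) * t ^ n * (1 / 2 ^ i) ^ 2 *
              ((2 ^ i : ℝ) ^ n * (1 / 2 ^ i) ^ n) := by ring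
          _ = _ := by rw [e5, mul_one]
    _ = C * 2 ^ (2 * n + 2) * t ^ n * ∑ i ∈ Finset.range K, (1 / 4 : ℝ) ^ i := by
        rw [Finset.mul_sum]
    _ ≤ C * 2 ^ (2 * n + 2) * t ^ n * 2 := by
        gcongr
        rw [geom_sum_eq (by norm_num)]
        have : (0 : ℝ) ≤ (1 / 4) ^ K := by positivity
        rw [div_le_iff_of_neg (by norm_num)]
        linarith
    _ = t ^ n * (C * 2 ^ (2 * n + 3)) := by ring

/-- Uniform convergence of nonnegative series with summable block bounds. -/
theorem block_uniform {Q : Type*} {N : ℤ → ℕ} (F : ((j : ℤ) × Fin (N j)) → Q → ℝ) (S : Set Q)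
    (hF : ∀ p q, 0 ≤ F p q) (b : ℤ → ℝ) (hb : Summable b)
    (hle : ∀ q ∈ S, ∀ j, ∑ k, F ⟨j, k⟩ q ≤ b j) :
    TendstoUniformlyOn (fun (s : Finset ((j : ℤ) × Fin (N j))) q => ∑ p ∈ s, F p q)
      (fun q => ∑' p, F p q) Filter.atTop S := by
  have hsig : ∀ q ∈ S, Summable fun j => ∑ k, F ⟨j, k⟩ q := fun q hq =>
    Summable.of_nonneg_of_le (fun j => Finset.sum_nonneg fun k _ => hF _ _) (hle q hq) hb
  have hsum : ∀ q ∈ S, Summable fun p => F p q := by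
    intro q hq
    rw [summable_sigma_of_nonneg (fun p => hF p q)]
    refine ⟨fun j => Summable.of_finite, ?_⟩
    simpa only [tsum_fintype] using hsig q hq
  rw [Metric.tendstoUniformlyOn_iff]
  intro ε hε
  have hb' := hb.hasSum
  obtain ⟨T, hT⟩ := (Metric.tendsto_atTop.1 hb') ε hε
  refine Filter.eventually_atTop.2 ⟨T.sigma fun _ => Finset.univ, fun s hs q hq => ?_⟩
  have hTT := hT T le_rfl
  have h1 : ∑ p ∈ T.sigma (fun _ => Finset.univ), F p q ≤ ∑ p ∈ s, F p q :=
    Finset.sum_le_sum_of_subset_of_nonneg hs fun p _ _ => hF p q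
  have h2 : ∑ p ∈ s, F p q ≤ ∑' p, F p q := (hsum q hq).sum_le_tsum s fun p _ => hF p q
  rw [Finset.sum_sigma] at h1
  have h3 : ∑' p, F p q = ∑' j, ∑ k, F ⟨j, k⟩ q := by
    rw [(hsum q hq).tsum_sigma]
    simp only [tsum_fintype]
  have h4 := (hsig q hq).sum_add_tsum_compl (s := T)
  have h5 := hb.sum_add_tsum_compl (s := T)
  have h6 : ∑' j : ↑((T : Set ℤ)ᶜ), ∑ k, F ⟨j, k⟩ q ≤ ∑' j : ↑((T : Set ℤ)ᶜ), b j :=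
    Summable.tsum_le_tsum (fun j => hle q hq j) ((hsig q hq).subtype _) (hb.subtype _)
  rw [Real.dist_eq] at hTT ⊢
  rw [abs_lt] at hTT
  rw [abs_of_nonneg (by linarith)]
  linarith

theorem far_value (n : ℕ) (d t f η : ℝ) (ht : 0 < t) (hη : 0 < η) (hd : η / 2 ≤ d) (hf : 0 ≤ f)
    (h1 : t ^ n * ((d / t) ^ (n + 2) * f) ≤ 1) : f ≤ (2 / η) ^ (n + 2) * t ^ 2 := by
  have e : t ^ n * ((d / t) ^ (n + 2) * f) = d ^ (n + 2) * f / t ^ 2 := by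
    rw [div_pow]
    field_simp
    ring
  rw [e, div_le_one (by positivity)] at h1
  have h2 : (η / 2) ^ (n + 2) * f ≤ t ^ 2 := le_trans (by gcongr) h1
  have e2 : (2 / η) ^ (n + 2) * (η / 2) ^ (n + 2) = 1 := by
    rw [← mul_pow, show 2 / η * (η / 2) = 1 by field_simp, one_pow]
  calc f = (2 / η) ^ (n + 2) * ((η / 2) ^ (n + 2) * f) := by rw [← mul_assoc, e2, one_mul]
    _ ≤ _ := by gcongr

theorem block_bound (n : ℕ) (hn : 1 ≤ n) {M : Type*} [MetricSpace M] [MeasurableSpace M]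
    (μ : Measure M) [IsFiniteMeasure μ] (C : ℝ) (hC : 0 ≤ C)
    (hgrow : ∀ (y : M) (r : ℝ), 0 < r → μ.real (ball y r) ≤ C * r ^ n)
    (N : ℕ) (E : Fin N → Set M) (hE : ∀ k, MeasurableSet (E k))
    (hdisj : Pairwise fun k k' => Disjoint (E k) (E k')) (t : ℝ) (ht : 0 < t)
    (xp : Fin N → M) (hxp : ∀ k, ∀ z ∈ E k, dist z (xp k) < t)
    (η : ℝ) (hη : 0 < η)
    (x y : M) (hxy : η ≤ dist x y) (u v : Fin N → ℝ) (hu : ∀ k, 0 ≤ u k) (hv : ∀ k, 0 ≤ v k)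
    (hu0 : ∀ k, t ^ n * u k ≤ 1)
    (hu1 : ∀ k, t ^ n * ((dist (xp k) x / t) ^ (n + 2) * u k) ≤ 1)
    (hv0 : ∀ k, t ^ n * v k ≤ 1)
    (hv1 : ∀ k, t ^ n * ((dist (xp k) y / t) ^ (n + 2) * v k) ≤ 1)
    (w : ℝ) (hw1 : 1 ≤ t → w ≤ 1) (hw2 : t ≤ 1 → w ≤ t⁻¹) :
    ∑ k, w * (μ.real (E k) * (u k * v k)) ≤
      (μ.real Set.univ + (2 / η) ^ (n + 2) * (2 * (C * 2 ^ (2 * n + 3)))) * min t t⁻¹ := by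
  rw [← Finset.mul_sum]
  rcases le_total 1 t with h | h
  · have hmin : min t t⁻¹ = t⁻¹ := min_eq_right ((inv_le_one_of_one_le₀ h).trans h)
    rw [hmin]
    have hsum : ∑ k, μ.real (E k) ≤ μ.real Set.univ := by
      rw [← measureReal_biUnion_finset (fun a _ b _ hab => hdisj hab) (fun k _ => hE k)]
      exact measureReal_mono (Set.subset_univ _)
    have hterm : ∀ k, u k * v k ≤ t⁻¹ := by
      intro k
      have a1 : u k ≤ 1 := le_trans (le_mul_of_one_le_left (hu k) (one_le_pow₀ h)) (hu0 k)
      have a2 : t * v k ≤ 1 :=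
        le_trans (mul_le_mul_of_nonneg_right (le_self_pow₀ h (by lia)) (hv k)) (hv0 k)
      have a3 : v k ≤ t⁻¹ := by
        rw [← one_div, le_div_iff₀ ht]
        linarith
      calc u k * v k ≤ 1 * t⁻¹ := mul_le_mul a1 a3 (hv k) zero_le_one
        _ = t⁻¹ := one_mul _
    calc w * ∑ k, μ.real (E k) * (u k * v k) ≤ 1 * ∑ k, μ.real (E k) * t⁻¹ := by
          apply mul_le_mul (hw1 h) _ _ zero_le_one
          · exact Finset.sum_le_sum fun k _ =>
              mul_le_mul_of_nonneg_left (hterm k) measureReal_nonneg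
          · exact Finset.sum_nonneg fun k _ =>
              mul_nonneg measureReal_nonneg (mul_nonneg (hu k) (hv k))
      _ = (∑ k, μ.real (E k)) * t⁻¹ := by rw [one_mul, Finset.sum_mul]
      _ ≤ μ.real Set.univ * t⁻¹ := by gcongr
      _ ≤ _ := by
          gcongr
          exact le_add_of_nonneg_right (by positivity)
  · have hmin : min t t⁻¹ = t := min_eq_left (h.trans ((one_le_inv₀ ht).2 h))
    rw [hmin]
    set D := (2 / η) ^ (n + 2) with hD
    have hDpos : 0 < D := by positivity
    have hterm : ∀ k, u k * v k ≤ D * t ^ 2 * (u k + v k) := by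
      intro k
      have hor : η / 2 ≤ dist (xp k) x ∨ η / 2 ≤ dist (xp k) y := by
        by_contra! hh
        linarith [dist_triangle_left x y (xp k)]
      have hp : 0 ≤ D * t ^ 2 := by positivity
      rcases hor with hh | hh
      · have := far_value n _ t (u k) η ht hη hh (hu k) (hu1 k)
        nlinarith [hu k, hv k, mul_nonneg hp (hu k), mul_le_mul_of_nonneg_right this (hv k)]
      · have := far_value n _ t (v k) η ht hη hh (hv k) (hv1 k)
        nlinarith [hu k, hv k, mul_nonneg hp (hv k), mul_le_mul_of_nonneg_right this (hu k)]
    have su := scale_sum n μ C hC hgrow N E hE hdisj t ht xp hxp x u hu hu0 hu1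
    have sv := scale_sum n μ C hC hgrow N E hE hdisj t ht xp hxp y v hv hv0 hv1
    have hs : ∑ k, μ.real (E k) * (u k * v k) ≤ D * t ^ 2 * (2 * (C * 2 ^ (2 * n + 3))) := by
      calc ∑ k, μ.real (E k) * (u k * v k)
          ≤ ∑ k, μ.real (E k) * (D * t ^ 2 * (u k + v k)) :=
            Finset.sum_le_sum fun k _ => mul_le_mul_of_nonneg_left (hterm k) measureReal_nonneg
        _ = D * t ^ 2 * (∑ k, μ.real (E k) * u k + ∑ k, μ.real (E k) * v k) := by
            rw [← Finset.sum_add_distrib, Finset.mul_sum]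
            exact Finset.sum_congr rfl fun _ _ => by ring
        _ ≤ _ := by
            gcongr
            linarith
    calc w * ∑ k, μ.real (E k) * (u k * v k)
        ≤ t⁻¹ * (D * t ^ 2 * (2 * (C * 2 ^ (2 * n + 3)))) := by
          apply mul_le_mul (hw2 h) hs _ (by positivity)
          exact Finset.sum_nonneg fun k _ =>
            mul_nonneg measureReal_nonneg (mul_nonneg (hu k) (hv k))
      _ = D * (2 * (C * 2 ^ (2 * n + 3))) * t := by field_simp
      _ ≤ _ := by
          gcongr
          exact le_add_of_nonneg_left measureReal_nonneg

theorem summable_min (a : ℝ) (ha : 1 < a) : Summable fun j : ℤ => min (a ^ j) (a ^ j)⁻¹ := by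
  have h0 : 0 < a := by linarith
  have hg : Summable fun m : ℕ => (a⁻¹) ^ m :=
    summable_geometric_of_lt_one (by positivity) (inv_lt_one_of_one_lt₀ ha)
  apply Summable.of_nat_of_neg
  · refine Summable.of_nonneg_of_le (fun m => by positivity) (fun m => ?_) hg
    refine (min_le_right _ _).trans (le_of_eq ?_)
    simp
  · refine Summable.of_nonneg_of_le (fun m => by positivity) (fun m => ?_) hg
    refine (min_le_left _ _).trans (le_of_eq ?_)
    simp

/-- **Uniform convergence of the near-diagonal summation away from the diagonal.**
On a smooth compact Riemannian `n`-manifold `M`, with `a > 1`, partitions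
`{E_{j,k}}` of `M` into finitely many measurable pieces of diameter `< a^j`,
points `x_{j,k} ∈ E_{j,k}`, functions `Φ_{j,k}, Ψ_{j,k} ∈ 𝒩_{x_{j,k},a^j}` and
`0 ≤ J ≤ 1`, for every `η > 0` the series
`∑_{j,k} a^{−jJ} μ(E_{j,k}) |Φ_{j,k}(x)Ψ_{j,k}(y)|` converges uniformly on
`{(x,y) : d(x,y) ≥ η}`. -/
theorem statement_9 (n : ℕ) (hn : 1 ≤ n)
    (M : Type*) [MetricSpace M] [CompactSpace M]
    [ChartedSpace (EuclideanSpace ℝ (Fin n)) M] [IsManifold (𝓡 n) (⊤ : ℕ∞) M]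
    [MeasurableSpace M] [BorelSpace M]
    -- the geodesic distance is locally bi-Lipschitz comparable to chart coordinates
    (hbilip : ∀ x : M, ∃ ε : ℝ, 0 < ε ∧ ∃ L : ℝ, 0 < L ∧
      ball x ε ⊆ (chartAt (EuclideanSpace ℝ (Fin n)) x).source ∧
      ∀ y ∈ ball x ε, ∀ z ∈ ball x ε,
        (1 / L) * ‖chartAt (EuclideanSpace ℝ (Fin n)) x y -
            chartAt (EuclideanSpace ℝ (Fin n)) x z‖ ≤ dist y z ∧
        dist y z ≤ L * ‖chartAt (EuclideanSpace ℝ (Fin n)) x y -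
            chartAt (EuclideanSpace ℝ (Fin n)) x z‖)
    -- the Riemannian measure is the `n`-dimensional Hausdorff measure of `d`
    (μ : Measure M) (hμ : μ = μH[(n : ℝ)])
    (a : ℝ) (ha : 1 < a)
    (N : ℤ → ℕ) (E : (j : ℤ) → Fin (N j) → Set M)
    (hEmeas : ∀ j k, MeasurableSet (E j k))
    (hEdisj : ∀ j, Pairwise fun k k' => Disjoint (E j k) (E j k'))
    (hEcover : ∀ j, (⋃ k, E j k) = Set.univ)
    (hEdiam : ∀ j k, Metric.diam (E j k) < a ^ j)
    (xp : (j : ℤ) → Fin (N j) → M) (hxp : ∀ j k, xp j k ∈ E j k)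
    (Φ Ψ : (j : ℤ) → Fin (N j) → (M → ℂ))
    (hΦ : ∀ j k, Φ j k ∈ NClass n (xp j k) (a ^ j))
    (hΨ : ∀ j k, Ψ j k ∈ NClass n (xp j k) (a ^ j))
    (J : ℝ) (hJ0 : 0 ≤ J) (hJ1 : J ≤ 1)
    (η : ℝ) (hη : 0 < η) :
    TendstoUniformlyOn
      (fun (s : Finset ((j : ℤ) × Fin (N j))) (q : M × M) =>
        ∑ p ∈ s, a ^ (-(p.1 : ℝ) * J) * ((μ (E p.1 p.2)).toReal *
          (‖Φ p.1 p.2 q.1‖ * ‖Ψ p.1 p.2 q.2‖)))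
      (fun q : M × M =>
        ∑' p : (j : ℤ) × Fin (N j), a ^ (-(p.1 : ℝ) * J) * ((μ (E p.1 p.2)).toReal *
          (‖Φ p.1 p.2 q.1‖ * ‖Ψ p.1 p.2 q.2‖)))
      Filter.atTop
      {q : M × M | η ≤ dist q.1 q.2} := by
  have h0 : 0 < a := by linarith
  have hloc : ∀ x : M, ∃ ε : ℝ, 0 < ε ∧ ∃ C : ℝ, 0 ≤ C ∧ ∀ y ∈ ball x ε, ∀ r : ℝ, 0 < r → r ≤ ε →
      μ (ball y r) ≤ ENNReal.ofReal (C * r ^ n) := by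
    intro x
    obtain ⟨ε, hε, L, hL, _, h⟩ := hbilip x
    obtain ⟨C, hC, hh⟩ := local_growth n (chartAt (EuclideanSpace ℝ (Fin n)) x) x ε L hL h
    rw [hμ]
    exact ⟨ε / 2, by positivity, C, hC, hh⟩
  obtain ⟨hfin, C, hC, hgrow⟩ := global_growth n μ hloc
  refine block_uniform (fun p (q : M × M) => a ^ (-(p.1 : ℝ) * J) * ((μ (E p.1 p.2)).toReal *
          (‖Φ p.1 p.2 q.1‖ * ‖Ψ p.1 p.2 q.2‖))) _ (fun p q => by positivity)
    (fun j => (μ.real Set.univ + (2 / η) ^ (n + 2) * (2 * (C * 2 ^ (2 * n + 3)))) *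
      min (a ^ j) (a ^ j)⁻¹) ((summable_min a ha).mul_left _) ?_
  rintro ⟨x, y⟩ hxy j
  have ht : 0 < a ^ j := by positivity
  refine block_bound n hn μ C hC hgrow (N j) (E j) (hEmeas j) (hEdisj j) (a ^ j) ht (xp j) ?_
    η hη x y hxy (fun k => ‖Φ j k x‖) (fun k => ‖Ψ j k y‖) (fun k => norm_nonneg _)
    (fun k => norm_nonneg _) ?_ ?_ ?_ ?_ (a ^ (-(j : ℝ) * J)) ?_ ?_
  · intro k z hz
    exact (dist_le_diam_of_mem (isCompact_univ.isBounded.subset (Set.subset_univ _)) hz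
      (hxp j k)).trans_lt (hEdiam j k)
  · intro k
    simpa using (hΦ j k).2 x 0 (by lia)
  · intro k
    exact (hΦ j k).2 x (n + 2) le_rfl
  · intro k
    simpa using (hΨ j k).2 y 0 (by lia)
  · intro k
    exact (hΨ j k).2 y (n + 2) le_rfl
  · intro h
    have hj : (0 : ℝ) ≤ j := by
      rw [one_le_zpow_iff_right₀ ha] at h
      exact_mod_cast h
    exact Real.rpow_le_one_of_one_le_of_nonpos ha.le (by nlinarith)
  · intro h
    have hj : (j : ℝ) ≤ 0 := by
      rw [zpow_le_one_iff_right₀ ha] at h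
      exact_mod_cast h
    rw [← Real.rpow_intCast, ← Real.rpow_neg h0.le]
    exact Real.rpow_le_rpow_of_exponent_le ha.le (by nlinarith)
end
end

section
/- Let S² be the unit sphere in ℝ³ with geodesic distance d and surface measure μ, fix a finite set 𝒫 of smooth real vector fields on S² spanning the tangent space at each point, and set 𝒫₀ = 𝒫 ∪ {identity}. Fix a > 1. Then there exists C₂ > 0 as follows. For each j ∈ ℤ, write S² as a finite disjoint union of measurable sets {E_{j,k} : 1 ≤ k ≤ N_j}, each of diameter less than a^j; select x_{j,k} ∈ E_{j,k}; and select φ_{j,k}, ψ_{j,k} ∈ ℳ_{x_{j,k}, a^j}. Then: (a) for every F ∈ C¹(S²), the series SF = ∑_{j∈ℤ} ∑_{k=1}^{N_j} μ(E_{j,k}) ⟨F, φ_{j,k}⟩ ψ_{j,k} converges absolutely, uniformly on S²; and (b) ‖SF‖_{L²} ≤ C₂ ‖F‖_{L²} for all F ∈ C¹(S²), so that S extends to a bounded operator on L²(S²) with norm at most C₂. -/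
open Metric Manifold MeasureTheory
open scoped RealInnerProductSpace

noncomputable section

abbrev E3 : Type := EuclideanSpace ℝ (Fin 3)

/-- The unit sphere `S² ⊆ ℝ³`. -/
abbrev Sph : Type := Metric.sphere (0 : E3) 1

instance : Fact (Module.finrank ℝ E3 = 2 + 1) := ⟨by simp⟩

/-- The geodesic distance on the sphere, `d(x,y) = arccos⟨x,y⟩`. -/
def gdist (x y : Sph) : ℝ := Real.arccos ⟪(x : E3), (y : E3)⟫

/-- The surface measure on the sphere. -/
def sphMeasure : Measure Sph := (volume : Measure E3).toSphere

/-- A vector field `X` applied to a function `ω : S² → ℂ`, i.e. `(Xω)(x)`. -/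
def mderivApplyS (ω : Sph → ℂ) (x : Sph) (v : TangentSpace (𝓡 2) x) : ℂ :=
  mfderiv (𝓡 2) 𝓘(ℝ, ℂ) ω x v

/-- The class `ℳ_{x,t}`: smooth mean-zero functions `φ` on `S²` such that
`t^{2+deg Y} |(d(x,y)/t)^N (Yφ)(y)| ≤ 1` for all `y ∈ S²`, `Y ∈ 𝒫₀ = 𝒫 ∪ {id}`
and integers `0 ≤ N ≤ 4`, where `𝒫 = {X i}`. -/
def MClass {ι : Type*} (X : ι → (x : Sph) → TangentSpace (𝓡 2) x)
    (x : Sph) (t : ℝ) : Set (Sph → ℂ) :=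
  {φ | ContMDiff (𝓡 2) 𝓘(ℝ, ℂ) (⊤ : ℕ∞) φ ∧
    (∫ y, φ y ∂sphMeasure) = 0 ∧
    (∀ (y : Sph) (N : ℕ), N ≤ 4 → t ^ 2 * ((gdist x y / t) ^ N * ‖φ y‖) ≤ 1) ∧
    (∀ i : ι, ∀ (y : Sph) (N : ℕ), N ≤ 4 →
      t ^ 3 * ((gdist x y / t) ^ N * ‖mderivApplyS φ y (X i y)‖) ≤ 1)}

/-- The inner product `⟨F,φ⟩ = ∫ F φ̄ dμ` on the sphere. -/
def sphInner (F φ : Sph → ℂ) : ℂ := ∫ y, F y * (starRingEnd ℂ) (φ y) ∂sphMeasure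

section Abstract

open scoped InnerProductSpace

/-- Weighted Schur test, Bessel form. -/
theorem bessel_schur {H P : Type*} [NormedAddCommGroup H] [InnerProductSpace ℂ H]
    (v : P → H) (m w : P → ℝ) (hm : ∀ p, 0 ≤ m p) (hw : ∀ p, 0 < w p) (C : ℝ) (hC : 0 ≤ C)
    (hrow : ∀ (s : Finset P) (p : P), ∑ q ∈ s, m q * w q * ‖inner ℂ (v p) (v q)‖ ≤ C * w p)
    (s : Finset P) (h : H) :
    ∑ p ∈ s, m p * ‖inner ℂ (v p) h‖ ^ 2 ≤ C * ‖h‖ ^ 2 := by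
  set b : P → ℝ := fun p => ‖inner ℂ (v p) h‖ with hb
  set Q := ∑ p ∈ s, m p * b p ^ 2 with hQ
  have hQ0 : 0 ≤ Q := Finset.sum_nonneg fun p _ => mul_nonneg (hm p) (sq_nonneg _)
  set z : H := ∑ p ∈ s, ((m p : ℂ) * inner ℂ (v p) h) • v p with hz
  have h1 : Q ≤ ‖z‖ * ‖h‖ := by
    have : inner ℂ z h = (Q : ℂ) := by
      rw [hz, sum_inner, hQ]
      push_cast
      refine Finset.sum_congr rfl fun p _ => ?_
      rw [inner_smul_left, map_mul, Complex.conj_ofReal, mul_assoc, hb]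
      simp only
      rw [mul_comm ((starRingEnd ℂ) _), Complex.mul_conj, Complex.normSq_eq_norm_sq]
      push_cast; rfl
    have h2 := norm_inner_le_norm (𝕜 := ℂ) z h
    rw [this, Complex.norm_real, Real.norm_of_nonneg hQ0] at h2
    exact h2
  have h2 : ‖z‖ ^ 2 ≤ C * Q := by
    have e1 : ‖z‖ ^ 2 ≤ ∑ p ∈ s, ∑ q ∈ s, m p * b p * (m q * b q) * ‖inner ℂ (v p) (v q)‖ := by
      have : ‖z‖ ^ 2 = ‖inner ℂ z z‖ := by
        rw [inner_self_eq_norm_sq_to_K]; simp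
      rw [this, hz, sum_inner]
      refine (norm_sum_le _ _).trans (Finset.sum_le_sum fun p _ => ?_)
      rw [inner_sum]
      refine (norm_sum_le _ _).trans (Finset.sum_le_sum fun q _ => ?_)
      rw [inner_smul_left, inner_smul_right]
      simp only [norm_mul, RCLike.norm_conj, Complex.norm_real, Real.norm_of_nonneg (hm _)]
      apply le_of_eq; simp only [hb]; ring
    have e2 : ∀ p q, m p * b p * (m q * b q) * ‖inner ℂ (v p) (v q)‖ ≤
        (m p * b p ^ 2 / w p * (m q * w q * ‖inner ℂ (v p) (v q)‖) +
          m q * b q ^ 2 / w q * (m p * w p * ‖inner ℂ (v q) (v p)‖)) / 2 := by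
      intro p q
      rw [norm_inner_symm (v q) (v p)]
      have hp := hw p
      have hq := hw q
      have : b p * b q ≤ (b p ^ 2 / w p * w q + b q ^ 2 / w q * w p) / 2 := by
        rw [div_mul_eq_mul_div, div_mul_eq_mul_div, div_add_div _ _ hp.ne' hq.ne', div_div,
          le_div_iff₀ (by positivity)]
        nlinarith [sq_nonneg (b p * w q - b q * w p)]
      have hg : 0 ≤ m p * m q * ‖inner ℂ (v p) (v q)‖ :=
        mul_nonneg (mul_nonneg (hm p) (hm q)) (norm_nonneg _)
      calc _ = (m p * m q * ‖inner ℂ (v p) (v q)‖) * (b p * b q) := by ring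
        _ ≤ (m p * m q * ‖inner ℂ (v p) (v q)‖) * ((b p ^ 2 / w p * w q + b q ^ 2 / w q * w p) / 2) :=
          mul_le_mul_of_nonneg_left this hg
        _ = _ := by ring
    have e3 : ∑ p ∈ s, ∑ q ∈ s, m p * b p ^ 2 / w p * (m q * w q * ‖inner ℂ (v p) (v q)‖) ≤ C * Q := by
      rw [hQ, Finset.mul_sum]
      refine Finset.sum_le_sum fun p _ => ?_
      rw [← Finset.mul_sum]
      have hp := hw p
      calc _ ≤ m p * b p ^ 2 / w p * (C * w p) := by
            refine mul_le_mul_of_nonneg_left (hrow s p) ?_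
            exact div_nonneg (mul_nonneg (hm p) (sq_nonneg _)) hp.le
        _ = _ := by field_simp
    calc ‖z‖ ^ 2 ≤ _ := e1
      _ ≤ _ := Finset.sum_le_sum fun p _ => Finset.sum_le_sum fun q _ => e2 p q
      _ = (∑ p ∈ s, ∑ q ∈ s, m p * b p ^ 2 / w p * (m q * w q * ‖inner ℂ (v p) (v q)‖) +
        ∑ p ∈ s, ∑ q ∈ s, m q * b q ^ 2 / w q * (m p * w p * ‖inner ℂ (v q) (v p)‖)) / 2 := by
          simp only [add_div, Finset.sum_add_distrib, Finset.sum_div]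
      _ ≤ C * Q := by
          rw [Finset.sum_comm (s := s) (t := s)
            (f := fun p q => m q * b q ^ 2 / w q * (m p * w p * ‖inner ℂ (v q) (v p)‖))]
          linarith
  by_cases hQz : Q = 0
  · rw [hQz]; positivity
  have hQp : 0 < Q := lt_of_le_of_ne hQ0 (Ne.symm hQz)
  have h3 : Q * Q ≤ C * ‖h‖ ^ 2 * Q := by
    calc Q * Q ≤ (‖z‖ * ‖h‖) * (‖z‖ * ‖h‖) := mul_le_mul h1 h1 hQ0 (by positivity)
      _ = ‖z‖ ^ 2 * ‖h‖ ^ 2 := by ring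
      _ ≤ C * Q * ‖h‖ ^ 2 := by gcongr
      _ = _ := by ring
  exact le_of_mul_le_mul_right h3 hQp

/-- Analysis operator of a Bessel family. -/
theorem exists_analysis {H P : Type*} [NormedAddCommGroup H] [InnerProductSpace ℂ H]
    (v : P → H) (m : P → ℝ) (hm : ∀ p, 0 ≤ m p) (C : ℝ) (hC : 0 ≤ C)
    (hB : ∀ (s : Finset P) (h : H), ∑ p ∈ s, m p * ‖inner ℂ (v p) h‖ ^ 2 ≤ C * ‖h‖ ^ 2) :
    ∃ A : H →L[ℂ] lp (fun _ : P => ℂ) 2, ‖A‖ ≤ Real.sqrt C ∧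
      ∀ h p, (A h : P → ℂ) p = (Real.sqrt (m p) : ℂ) * inner ℂ (v p) h := by
  have hsq : ∀ (p : P) (h : H), ‖(Real.sqrt (m p) : ℂ) * inner ℂ (v p) h‖ ^ 2 =
      m p * ‖inner ℂ (v p) h‖ ^ 2 := by
    intro p h
    rw [norm_mul, mul_pow, Complex.norm_real, Real.norm_of_nonneg (Real.sqrt_nonneg _),
      Real.sq_sqrt (hm p)]
  have hmem : ∀ h : H, Memℓp (fun p : P => (Real.sqrt (m p) : ℂ) * inner ℂ (v p) h) 2 := by
    intro h
    apply memℓp_gen' (C := C * ‖h‖ ^ 2)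
    intro s
    refine le_trans (le_of_eq ?_) (hB s h)
    refine Finset.sum_congr rfl fun p _ => ?_
    rw [← hsq]; norm_num
  let A0 : H →ₗ[ℂ] lp (fun _ : P => ℂ) 2 :=
    { toFun := fun h => ⟨_, hmem h⟩
      map_add' := by
        intro x y
        ext p
        simp [mul_add]
        rfl
      map_smul' := by
        intro c x
        ext p
        simp; ring }
  have hA0 : ∀ h, ‖A0 h‖ ≤ Real.sqrt C * ‖h‖ := by
    intro h
    refine lp.norm_le_of_forall_sum_le (p := 2) (by norm_num) (by positivity) ?_
    intro s
    have : (Real.sqrt C * ‖h‖) ^ (2 : ENNReal).toReal = C * ‖h‖ ^ 2 := by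
      norm_num [mul_pow, Real.sq_sqrt hC]
    rw [this]
    refine le_trans (le_of_eq ?_) (hB s h)
    refine Finset.sum_congr rfl fun p _ => ?_
    rw [← hsq, show (2 : ENNReal).toReal = ((2 : ℕ) : ℝ) by norm_num, Real.rpow_natCast]
    rfl
  exact ⟨A0.mkContinuous _ hA0, A0.mkContinuous_norm_le (Real.sqrt_nonneg _) _, fun h p => rfl⟩

/-- The summation operator of two Bessel families. -/
theorem exists_sum_operator {H P : Type*} [NormedAddCommGroup H] [InnerProductSpace ℂ H]
    [CompleteSpace H]
    (v u : P → H) (m : P → ℝ) (hm : ∀ p, 0 ≤ m p) (C : ℝ) (hC : 0 ≤ C)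
    (hv : ∀ (s : Finset P) (h : H), ∑ p ∈ s, m p * ‖inner ℂ (v p) h‖ ^ 2 ≤ C * ‖h‖ ^ 2)
    (hu : ∀ (s : Finset P) (h : H), ∑ p ∈ s, m p * ‖inner ℂ (u p) h‖ ^ 2 ≤ C * ‖h‖ ^ 2) :
    ∃ S : H →L[ℂ] H, ‖S‖ ≤ C ∧
      ∀ h, HasSum (fun p => ((m p : ℂ) * inner ℂ (v p) h) • u p) (S h) := by
  classical
  obtain ⟨A, hA, hA'⟩ := exists_analysis v m hm C hC hv
  obtain ⟨B, hB, hB'⟩ := exists_analysis u m hm C hC hu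
  refine ⟨(ContinuousLinearMap.adjoint B).comp A, ?_, ?_⟩
  · refine (ContinuousLinearMap.opNorm_comp_le _ _).trans ?_
    rw [LinearIsometryEquiv.norm_map]
    calc ‖B‖ * ‖A‖ ≤ Real.sqrt C * Real.sqrt C := by gcongr
      _ = C := Real.mul_self_sqrt hC
  · intro h
    have h1 := lp.hasSum_single (p := 2) (by norm_num) (A h)
    have h2 := h1.mapL (ContinuousLinearMap.adjoint B)
    refine h2.congr_fun ?_ |> fun x => x
    intro p
    refine ext_inner_right ℂ fun x => ?_
    rw [ContinuousLinearMap.adjoint_inner_left, lp.inner_single_left, hA', hB', inner_smul_left]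
    have : (Real.sqrt (m p) : ℂ) * (Real.sqrt (m p) : ℂ) = (m p : ℂ) := by
      rw [← Complex.ofReal_mul, Real.mul_self_sqrt (hm p)]
    rw [← this]
    simp only [RCLike.inner_apply, map_mul, Complex.conj_ofReal]
    ring

end Abstract

section Unif

theorem sigma_summable {N : ℤ → ℕ} (g : ((j : ℤ) × Fin (N j)) → ℝ) (h0 : ∀ p, 0 ≤ g p)
    (B : ℤ → ℝ) (hB : Summable B) (hg : ∀ j, ∑ k, g ⟨j, k⟩ ≤ B j) : Summable g := by
  rw [summable_sigma_of_nonneg h0]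
  refine ⟨fun j => (hasSum_fintype _).summable, ?_⟩
  refine Summable.of_nonneg_of_le (fun j => tsum_nonneg fun k => h0 _) (fun j => ?_) hB
  rw [tsum_fintype]; exact hg j

theorem sigma_uniform {α : Type*} {N : ℤ → ℕ} (f : ((j : ℤ) × Fin (N j)) → α → ℝ)
    (h0 : ∀ p x, 0 ≤ f p x)
    (B : ℤ → ℝ) (hB : Summable B) (hg : ∀ j x, ∑ k, f ⟨j, k⟩ x ≤ B j) :
    TendstoUniformly (fun (s : Finset ((j : ℤ) × Fin (N j))) (x : α) => ∑ p ∈ s, f p x)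
      (fun x => ∑' p, f p x) Filter.atTop := by
  classical
  have hs : ∀ x, Summable fun p => f p x := fun x =>
    sigma_summable _ (fun p => h0 p x) B hB (fun j => hg j x)
  rw [Metric.tendstoUniformly_iff]
  intro ε hε
  have hB0 := hB.hasSum
  have hev := (Metric.tendsto_nhds.1 hB0) ε hε
  obtain ⟨J, hJ⟩ := hev.exists
  filter_upwards [Filter.eventually_ge_atTop (J.sigma fun j => (Finset.univ : Finset (Fin (N j))))]
    with s hs' x
  have h1 : ∑ p ∈ s, f p x ≤ ∑' p, f p x := (hs x).sum_le_tsum s fun p _ => h0 p x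
  rw [Real.dist_eq, abs_of_nonneg (by linarith)]
  have h2 : ∑ p ∈ J.sigma fun j => (Finset.univ : Finset (Fin (N j))), f p x ≤ ∑ p ∈ s, f p x :=
    Finset.sum_le_sum_of_subset_of_nonneg hs' fun p _ _ => h0 p x
  rw [Finset.sum_sigma] at h2
  have h3 : ∑' p, f p x = ∑' j, ∑ k, f ⟨j, k⟩ x := by
    rw [(hs x).tsum_sigma]
    simp only [tsum_fintype]
  have h4 : Summable fun j => ∑ k, f ⟨j, k⟩ x := by
    have := (hs x).sigma
    simpa only [tsum_fintype] using this
  have h5 : ∑' j, (B j - ∑ k, f ⟨j, k⟩ x) = ∑' j, B j - ∑' j, ∑ k, f ⟨j, k⟩ x := hB.tsum_sub h4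
  have h6 : ∑ j ∈ J, (B j - ∑ k, f ⟨j, k⟩ x) ≤ ∑' j, (B j - ∑ k, f ⟨j, k⟩ x) :=
    (hB.sub h4).sum_le_tsum J fun j _ => sub_nonneg.2 (hg j x)
  rw [Finset.sum_sub_distrib] at h6
  rw [Real.dist_eq] at hJ
  have := abs_lt.1 hJ
  linarith

theorem summable_pow_natAbs (b : ℝ) (h0 : 0 ≤ b) (h1 : b < 1) :
    Summable fun n : ℤ => b ^ n.natAbs := by
  apply Summable.of_nat_of_neg
  · simpa using summable_geometric_of_lt_one h0 h1
  · simpa using summable_geometric_of_lt_one h0 h1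

end Unif

section Meas

instance : IsFiniteMeasure sphMeasure := by unfold sphMeasure; infer_instance

theorem gdist_nonneg (x y : Sph) : 0 ≤ gdist x y := Real.arccos_nonneg _

theorem norm_sph (x : Sph) : ‖(x : E3)‖ = 1 := by simp

theorem inner_sph_mem (x y : Sph) : -1 ≤ ⟪(x : E3), (y : E3)⟫ ∧ ⟪(x : E3), (y : E3)⟫ ≤ 1 := by
  have := abs_real_inner_le_norm (x : E3) (y : E3)
  rw [norm_sph, norm_sph, mul_one] at this
  exact abs_le.1 this

theorem dist_le_gdist (x y : Sph) : dist x y ≤ gdist x y := by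
  have h1 : dist x y ^ 2 = 2 - 2 * ⟪(x : E3), (y : E3)⟫ := by
    rw [Subtype.dist_eq, dist_eq_norm, norm_sub_sq_real, norm_sph, norm_sph]; ring
  have h2 : Real.cos (gdist x y) = ⟪(x : E3), (y : E3)⟫ :=
    Real.cos_arccos (inner_sph_mem x y).1 (inner_sph_mem x y).2
  have h3 := Real.one_sub_sq_div_two_le_cos (x := gdist x y)
  rw [h2] at h3
  exact le_of_sq_le_sq (by linarith) (gdist_nonneg x y)

theorem continuous_gdist (x : Sph) : Continuous (gdist x) := by
  unfold gdist
  fun_prop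

open scoped Pointwise in
/-- Upper bound for the measure of small balls. -/
theorem exists_ball_bound : ∃ C : ℝ, 0 < C ∧ ∀ (y : Sph) (r : ℝ), 0 < r →
    sphMeasure (Metric.ball y r) ≤ ENNReal.ofReal (C * r ^ 2) := by
  set V : ℝ := (volume (Metric.ball (0 : E3) 1)).toReal with hV
  have hVfin : volume (Metric.ball (0 : E3) 1) ≠ ⊤ := measure_ball_lt_top.ne
  have hV0 : 0 ≤ V := ENNReal.toReal_nonneg
  have hball : ∀ (c : E3) (r : ℝ), 0 < r →
      volume (Metric.ball c r) = ENNReal.ofReal (r ^ 3 * V) := by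
    intro c r hr
    rw [Measure.addHaar_ball _ _ hr.le, ENNReal.ofReal_mul (by positivity), hV,
      ENNReal.ofReal_toReal hVfin]
    simp
  have hsm : ∀ (y : Sph) (r : ℝ), 0 < r → r ≤ 1 →
      sphMeasure (Metric.ball y r) ≤ ENNReal.ofReal (3 * (2 * (8 * V)) * r ^ 2) := by
    intro y r hr hr1
    unfold sphMeasure
    rw [Measure.toSphere_apply' _ measurableSet_ball]
    set n := ⌈1 / r⌉₊ with hn
    have hsub : (Set.Ioo (0 : ℝ) 1 • ((↑) '' (Metric.ball y r) : Set E3)) ⊆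
        ⋃ i ∈ Finset.range n, Metric.ball ((i * r) • (y : E3)) (2 * r) := by
      rintro _ ⟨τ, hτ, _, ⟨z, hz, rfl⟩, rfl⟩
      have hτr : 0 ≤ τ / r := div_nonneg hτ.1.le hr.le
      have hf1 := Nat.floor_le hτr
      have hf2 := Nat.lt_floor_add_one (τ / r)
      have hlt : ⌊τ / r⌋₊ < n := by
        have h1 : (⌊τ / r⌋₊ : ℝ) < n := by
          refine lt_of_le_of_lt hf1 (lt_of_lt_of_le ?_ (Nat.le_ceil _))
          gcongr; exact hτ.2
        exact_mod_cast h1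
      simp only [Set.mem_iUnion]
      refine ⟨⌊τ / r⌋₊, Finset.mem_range.2 hlt, ?_⟩
      rw [mem_ball, dist_eq_norm]
      set i : ℝ := (⌊τ / r⌋₊ : ℝ)
      have hi1 : i * r ≤ τ := (le_div_iff₀ hr).1 hf1
      have hi2 : τ < (i + 1) * r := (div_lt_iff₀ hr).1 hf2
      have e : τ • (z : E3) - (i * r) • (y : E3) = τ • ((z : E3) - y) + (τ - i * r) • (y : E3) := by
        rw [smul_sub, sub_smul]; abel
      change ‖τ • (z : E3) - (i * r) • (y : E3)‖ < 2 * r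
      rw [e]
      refine lt_of_le_of_lt (norm_add_le _ _) ?_
      rw [norm_smul, norm_smul, norm_sph, Real.norm_of_nonneg hτ.1.le,
        Real.norm_of_nonneg (by linarith), mul_one]
      have hz' : ‖(z : E3) - y‖ < r := by
        rw [mem_ball, Subtype.dist_eq, dist_eq_norm] at hz; exact hz
      have : τ * ‖(z : E3) - y‖ ≤ 1 * ‖(z : E3) - y‖ := by gcongr; exact hτ.2.le
      linarith
    have hle : volume (Set.Ioo (0 : ℝ) 1 • ((↑) '' (Metric.ball y r) : Set E3)) ≤
        ENNReal.ofReal (2 * (8 * V) * r ^ 2) := by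
      refine (measure_mono hsub).trans ((measure_biUnion_finset_le _ _).trans ?_)
      simp_rw [hball _ (2 * r) (by positivity)]
      rw [Finset.sum_const, Finset.card_range, nsmul_eq_mul, ← ENNReal.ofReal_natCast,
        ← ENNReal.ofReal_mul (by positivity)]
      apply ENNReal.ofReal_le_ofReal
      have hn2 : (n : ℝ) ≤ 2 / r := by
        have := (Nat.ceil_lt_add_one (a := 1 / r) (by positivity)).le
        have h1 : 1 ≤ 1 / r := by rw [le_div_iff₀ hr]; linarith
        calc (n : ℝ) ≤ 1 / r + 1 := this
          _ ≤ 1 / r + 1 / r := by linarith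
          _ = 2 / r := by ring
      calc (n : ℝ) * ((2 * r) ^ 3 * V) ≤ 2 / r * ((2 * r) ^ 3 * V) := by gcongr
        _ = _ := by field_simp; ring
    calc _ ≤ (Module.finrank ℝ E3 : ENNReal) * ENNReal.ofReal (2 * (8 * V) * r ^ 2) := by gcongr
      _ = _ := by
        rw [show (Module.finrank ℝ E3 : ENNReal) = ENNReal.ofReal 3 by simp,
          ← ENNReal.ofReal_mul (by norm_num)]
        congr 1; ring
  set M : ℝ := (sphMeasure Set.univ).toReal with hM
  have hM0 : 0 ≤ M := ENNReal.toReal_nonneg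
  refine ⟨3 * (2 * (8 * V)) + M + 1, by positivity, fun y r hr => ?_⟩
  by_cases h : r ≤ 1
  · refine (hsm y r hr h).trans (ENNReal.ofReal_le_ofReal ?_)
    gcongr; linarith
  · refine (measure_mono (Set.subset_univ _)).trans ?_
    rw [← ENNReal.ofReal_toReal (measure_ne_top sphMeasure Set.univ)]
    apply ENNReal.ofReal_le_ofReal
    have : 1 ≤ r ^ 2 := by nlinarith
    have h2 : 0 ≤ 3 * (2 * (8 * V)) := by positivity
    nlinarith

/-- The decay weight. -/
def Wt (t : ℝ) (x y : Sph) : ℝ := ((1 + dist x y / t) ^ 3)⁻¹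

theorem Wt_nonneg {t : ℝ} (ht : 0 < t) (x y : Sph) : 0 ≤ Wt t x y := by
  unfold Wt; positivity

theorem Wt_le_one {t : ℝ} (ht : 0 < t) (x y : Sph) : Wt t x y ≤ 1 := by
  unfold Wt
  apply inv_le_one_of_one_le₀
  apply one_le_pow₀
  have : 0 ≤ dist x y / t := by positivity
  linarith

theorem continuous_Wt {t : ℝ} (ht : 0 < t) (x : Sph) : Continuous (Wt t x) := by
  unfold Wt
  refine Continuous.inv₀ (by fun_prop) fun y => ?_
  positivity

theorem integrable_cont {V : Type*} [NormedAddCommGroup V] {f : Sph → V} (hf : Continuous f) :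
    Integrable f sphMeasure :=
  hf.integrable_of_hasCompactSupport (HasCompactSupport.of_compactSpace f)

theorem exists_Wt_bound : ∃ C : ℝ, 0 < C ∧ ∀ (t : ℝ), 0 < t → ∀ x : Sph,
    ∫ y, Wt t x y ∂sphMeasure ≤ C * t ^ 2 := by
  obtain ⟨C, hC, hb⟩ := exists_ball_bound
  refine ⟨8 * C, by positivity, fun t ht x => ?_⟩
  have hmain : ∫⁻ y, ENNReal.ofReal (Wt t x y) ∂sphMeasure ≤ ENNReal.ofReal (8 * C * t ^ 2) := by
    have hpt : ∀ y, ENNReal.ofReal (Wt t x y) ≤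
        ∑' n : ℕ, (Metric.ball x (2 ^ (n + 1) * t)).indicator
          (fun _ => ENNReal.ofReal ((1 / 8) ^ n)) y := by
      intro y
      have h1 : 1 ≤ 1 + dist x y / t := by
        have : 0 ≤ dist x y / t := by positivity
        linarith
      obtain ⟨n, hn1, hn2⟩ := exists_nat_pow_near h1 (one_lt_two)
      refine le_trans ?_ (ENNReal.le_tsum n)
      have hmem : y ∈ Metric.ball x (2 ^ (n + 1) * t) := by
        rw [mem_ball, dist_comm, ← div_lt_iff₀ ht]; linarith
      rw [Set.indicator_of_mem hmem]
      apply ENNReal.ofReal_le_ofReal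
      unfold Wt
      rw [one_div, inv_pow]
      apply inv_anti₀ (by positivity)
      calc (8 : ℝ) ^ n = (2 ^ n) ^ 3 := by rw [← pow_mul, mul_comm, pow_mul]; norm_num
        _ ≤ _ := by gcongr
    refine (lintegral_mono hpt).trans ?_
    rw [lintegral_tsum (fun n => (measurable_const.indicator measurableSet_ball).aemeasurable)]
    have hn : ∀ n : ℕ, ∫⁻ y, (Metric.ball x (2 ^ (n + 1) * t)).indicator
          (fun _ => ENNReal.ofReal ((1 / 8) ^ n)) y ∂sphMeasure ≤
          ENNReal.ofReal (4 * C * t ^ 2 * (1 / 2) ^ n) := by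
      intro n
      rw [lintegral_indicator measurableSet_ball, setLIntegral_const]
      calc _ ≤ ENNReal.ofReal ((1 / 8) ^ n) * ENNReal.ofReal (C * (2 ^ (n + 1) * t) ^ 2) := by
            gcongr; exact hb x _ (by positivity)
        _ = _ := by
            rw [← ENNReal.ofReal_mul (by positivity)]
            congr 1
            have : ((1 : ℝ) / 2) ^ n = (1 / 8) ^ n * (2 ^ n) ^ 2 := by
              rw [← pow_mul, mul_comm n 2, pow_mul, ← mul_pow]; norm_num
            rw [this]; ring
    refine (ENNReal.tsum_le_tsum hn).trans ?_
    have hs : HasSum (fun n : ℕ => 4 * C * t ^ 2 * ((1 : ℝ) / 2) ^ n) (4 * C * t ^ 2 * 2) :=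
      hasSum_geometric_two.mul_left _
    rw [← ENNReal.ofReal_tsum_of_nonneg (fun n => by positivity) hs.summable, hs.tsum_eq]
    apply ENNReal.ofReal_le_ofReal
    linarith
  rw [integral_eq_lintegral_of_nonneg_ae (Filter.Eventually.of_forall fun y => Wt_nonneg ht x y)
    (continuous_Wt ht x).aestronglyMeasurable]
  exact ENNReal.toReal_le_of_le_ofReal (by positivity) hmain

/-- Discretisation of the weight integral over a partition. -/
theorem discretize {n : ℕ} (E : Fin n → Set Sph) (hE : ∀ k, MeasurableSet (E k))
    (hd : Pairwise fun k k' => Disjoint (E k) (E k')) (hU : (⋃ k, E k) = Set.univ)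
    {t : ℝ} (ht : 0 < t) (hdiam : ∀ k, ∀ y ∈ E k, ∀ z ∈ E k, gdist y z < t)
    (xp : Fin n → Sph) (hxp : ∀ k, xp k ∈ E k) (y : Sph) :
    ∑ k, (sphMeasure (E k)).toReal * Wt t (xp k) y ≤ 8 * ∫ z, Wt t y z ∂sphMeasure := by
  have hWint : Integrable (Wt t y) sphMeasure := integrable_cont (continuous_Wt ht y)
  rw [← setIntegral_univ, ← hU, integral_iUnion_fintype hE hd fun k => hWint.integrableOn,
    Finset.mul_sum]
  refine Finset.sum_le_sum fun k _ => ?_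
  rw [← integral_const_mul]
  have : (sphMeasure (E k)).toReal * Wt t (xp k) y =
      ∫ z in E k, Wt t (xp k) y ∂sphMeasure := by
    rw [setIntegral_const]; simp [Measure.real]
  rw [this]
  refine setIntegral_mono_on (integrable_const _) (hWint.integrableOn.const_mul 8) (hE k) ?_
  intro z hz
  have h1 : dist z (xp k) < t := (dist_le_gdist _ _).trans_lt (hdiam k z hz _ (hxp k))
  have h2 : dist y z ≤ dist z (xp k) + dist (xp k) y := by
    rw [dist_comm y z]; exact dist_triangle _ _ _
  unfold Wt
  rw [← div_eq_mul_inv, le_div_iff₀ (by positivity), inv_mul_le_iff₀ (by positivity)]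
  have h3 : dist y z / t ≤ 1 + dist (xp k) y / t := by
    rw [div_le_iff₀ ht, add_mul, div_mul_cancel₀ _ ht.ne']; linarith
  calc (1 + dist y z / t) ^ 3 ≤ (2 * (1 + dist (xp k) y / t)) ^ 3 := by
        gcongr
        have : 0 ≤ dist (xp k) y / t := by positivity
        linarith
    _ = _ := by ring

theorem decay_aux {u b : ℝ} (hb : 0 ≤ b) (h0 : b ≤ 1) (h4 : u ^ 4 * b ≤ 1) :
    b * (1 + u) ^ 4 ≤ 16 := by
  have : (1 + u) ^ 4 ≤ 8 * (1 + u ^ 4) := by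
    nlinarith [sq_nonneg (u - 1), sq_nonneg (u ^ 2 - 1), sq_nonneg (u ^ 2 - u)]
  nlinarith [mul_le_mul_of_nonneg_left this hb]

theorem decay_aux' {x y : Sph} {t b : ℝ} (ht : 0 < t) (hb : 0 ≤ b)
    (h : ∀ N : ℕ, N ≤ 4 → (gdist x y / t) ^ N * b ≤ 1) :
    b ≤ 16 * Wt t x y ∧ b * (gdist x y / t) ≤ 16 * Wt t x y := by
  have hu : 0 ≤ gdist x y / t := div_nonneg (gdist_nonneg _ _) ht.le
  have h1 := decay_aux hb (by simpa using h 0 (by norm_num)) (h 4 le_rfl)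
  set u := gdist x y / t
  have key : b * (1 + u) * (1 + dist x y / t) ^ 3 ≤ 16 := by
    refine le_trans ?_ h1
    calc b * (1 + u) * (1 + dist x y / t) ^ 3 ≤ b * (1 + u) * (1 + u) ^ 3 := by
          gcongr
          exact div_le_div_of_nonneg_right (dist_le_gdist x y) ht.le
      _ = _ := by ring
  have key2 : b * (1 + u) ≤ 16 * Wt t x y := by
    unfold Wt
    rw [← div_eq_mul_inv, le_div_iff₀ (by positivity)]; exact key
  have := mul_nonneg hb hu
  constructor <;> nlinarith

end Meas

section Geom

/-- The differential of the inclusion of the sphere. -/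
def dincl (y : Sph) : TangentSpace (𝓡 2) y →L[ℝ] E3 :=
  mvfderiv (𝓡 2) ((↑) : Sph → E3) y

theorem dincl_injective (y : Sph) : Function.Injective (dincl y) :=
  injective_mvfderiv_subtypeVal_sphere y

theorem dincl_range (y : Sph) : (dincl y).range = (Submodule.span ℝ {(y : E3)})ᗮ :=
  range_mvfderiv_subtypeVal y

theorem dincl_orth (y : Sph) (v : TangentSpace (𝓡 2) y) : ⟪(y : E3), dincl y v⟫ = 0 := by
  have h : dincl y v ∈ (Submodule.span ℝ {(y : E3)})ᗮ := by
    rw [← dincl_range]; exact ⟨v, rfl⟩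
  exact Submodule.mem_orthogonal_singleton_iff_inner_right.1 h

theorem continuous_deriv_field {V : Type*} [NormedAddCommGroup V] [NormedSpace ℝ V]
    {f : Sph → V} (hf : ContMDiff (𝓡 2) 𝓘(ℝ, V) 1 f)
    {X : (x : Sph) → TangentSpace (𝓡 2) x}
    (hX : Continuous (fun x => (⟨x, X x⟩ : TangentBundle (𝓡 2) Sph))) :
    Continuous (fun y => (mvfderiv (𝓡 2) f y (X y) : V)) := by
  have h1 := (hf.continuous_tangentMap le_rfl).comp hX
  have h2 := (tangentBundleModelSpaceHomeomorph 𝓘(ℝ, V)).continuous.comp h1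
  exact continuous_snd.comp h2

set_option maxHeartbeats 400000 in
theorem exists_coef {ι : Type*} [Fintype ι] (X : ι → (x : Sph) → TangentSpace (𝓡 2) x)
    (hX : ∀ i, Continuous (fun x => (⟨x, X i x⟩ : TangentBundle (𝓡 2) Sph)))
    (hXspan : ∀ x : Sph, Submodule.span ℝ (Set.range fun i => X i x) = ⊤) :
    ∃ C : ℝ, 0 < C ∧ ∀ (y : Sph) (v : TangentSpace (𝓡 2) y), ‖dincl y v‖ ≤ 1 →
      ∃ c : ι → ℝ, (∀ i, |c i| ≤ C) ∧ v = ∑ i, c i • X i y := by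
  set Z : ι → Sph → E3 := fun i y => dincl y (X i y) with hZ
  have hZc : ∀ i, Continuous (Z i) := fun i => continuous_deriv_field contMDiff_coe_sphere (hX i)
  let T : Sph → E3 →ₗ[ℝ] E3 := fun y =>
    ∑ i, (innerSL ℝ (Z i y)).toLinearMap.smulRight (Z i y) +
      (innerSL ℝ (y : E3)).toLinearMap.smulRight (y : E3)
  have hT : ∀ y w, T y w = ∑ i, ⟪Z i y, w⟫ • Z i y + ⟪(y : E3), w⟫ • (y : E3) := by
    intro y w; simp [T, LinearMap.sum_apply]
  set q : Sph → E3 → ℝ := fun y w => ∑ i, ⟪Z i y, w⟫ ^ 2 + ⟪(y : E3), w⟫ ^ 2 with hq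
  have hTq : ∀ y w, ⟪T y w, w⟫ = q y w := by
    intro y w
    rw [hT, inner_add_left, sum_inner]
    simp only [inner_smul_left, hq]
    simp [pow_two]
  have hqpos : ∀ y w, w ≠ 0 → 0 < q y w := by
    intro y w hw
    by_contra hcon
    have hs : 0 ≤ ∑ i, ⟪Z i y, w⟫ ^ 2 := Finset.sum_nonneg fun i _ => sq_nonneg _
    have hy : ⟪(y : E3), w⟫ = 0 := by
      have : ⟪(y : E3), w⟫ ^ 2 = 0 := by
        simp only [hq] at hcon
        nlinarith [sq_nonneg ⟪(y : E3), w⟫]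
      exact pow_eq_zero_iff (two_ne_zero) |>.1 this
    have hz : ∀ i, ⟪Z i y, w⟫ = 0 := by
      have h0 : ∑ i, ⟪Z i y, w⟫ ^ 2 = 0 := by
        simp only [hq] at hcon
        nlinarith [sq_nonneg ⟪(y : E3), w⟫]
      intro i
      have := (Finset.sum_eq_zero_iff_of_nonneg (fun i _ => sq_nonneg ⟪Z i y, w⟫)).1 h0 i
        (Finset.mem_univ i)
      exact pow_eq_zero_iff (two_ne_zero) |>.1 this
    have hmem : w ∈ (dincl y).range := by
      rw [dincl_range]; exact Submodule.mem_orthogonal_singleton_iff_inner_right.2 hy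
    obtain ⟨v, hv⟩ := hmem
    have hall : ∀ v' : TangentSpace (𝓡 2) y, ⟪dincl y v', w⟫ = 0 := by
      intro v'
      have hv' : v' ∈ Submodule.span ℝ (Set.range fun i => X i y) := by rw [hXspan]; trivial
      induction hv' using Submodule.span_induction with
      | mem x hx => obtain ⟨i, rfl⟩ := hx; exact hz i
      | zero => simp
      | add a b _ _ ha hb => rw [map_add, inner_add_left, ha, hb, add_zero]
      | smul c a _ ha => rw [map_smul, inner_smul_left, ha, mul_zero]
    have := hall v
    have hv2 : dincl y v = w := hv
    rw [hv2] at this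
    exact hw (inner_self_eq_zero.1 this)
  have hinj : ∀ y, Function.Injective (T y) := by
    intro y
    rw [← LinearMap.ker_eq_bot, LinearMap.ker_eq_bot']
    intro w hw
    by_contra hne
    have := hqpos y w hne
    rw [← hTq, hw, inner_zero_left] at this
    exact lt_irrefl _ this
  have hqc : Continuous fun p : Sph × Sph => q p.1 (p.2 : E3) := by
    simp only [hq]
    refine Continuous.add (continuous_finsetSum _ fun i _ => ?_) (by fun_prop)
    exact (((hZc i).comp continuous_fst).inner (by fun_prop)).pow 2
  have hne : (Set.univ : Set (Sph × Sph)).Nonempty := by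
    have : (Metric.sphere (0 : E3) 1).Nonempty := NormedSpace.sphere_nonempty.2 zero_le_one
    obtain ⟨p, hp⟩ := this
    exact ⟨(⟨p, hp⟩, ⟨p, hp⟩), trivial⟩
  have hmin : ∃ c0 : ℝ, 0 < c0 ∧ ∀ (y w : Sph), c0 ≤ q y (w : E3) := by
    obtain ⟨p0, -, hp0⟩ := isCompact_univ.exists_isMinOn hne hqc.continuousOn
    rw [isMinOn_iff] at hp0
    refine ⟨q p0.1 (p0.2 : E3), hqpos _ _ ?_, fun y w => hp0 (y, w) (Set.mem_univ _)⟩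
    intro h
    have := norm_sph p0.2
    rw [h, norm_zero] at this
    exact zero_ne_one this
  obtain ⟨c0, hc0pos, hp0⟩ := hmin
  have hlow : ∀ y w, c0 * ‖w‖ ^ 2 ≤ q y w := by
    intro y w
    by_cases hw : w = 0
    · simp [hw, hq]
    have hnw : 0 < ‖w‖ := norm_pos_iff.2 hw
    let w1 : Sph := ⟨(‖w‖)⁻¹ • w, by simp [norm_smul, hnw.ne']⟩
    have h1 : c0 ≤ q y (w1 : E3) := hp0 y w1
    have h2 : q y (w1 : E3) = (‖w‖)⁻¹ ^ 2 * q y w := by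
      simp only [hq, w1, inner_smul_right, mul_pow, mul_add, Finset.mul_sum]
    rw [h2] at h1
    calc c0 * ‖w‖ ^ 2 ≤ ((‖w‖)⁻¹ ^ 2 * q y w) * ‖w‖ ^ 2 := by gcongr
      _ = q y w := by field_simp
  refine ⟨1 / c0 + 1, by positivity, fun y v hv => ?_⟩
  obtain ⟨w, hw⟩ := (LinearMap.injective_iff_surjective.1 (hinj y)) (dincl y v)
  have hqw : q y w ≤ ‖w‖ := by
    rw [← hTq, hw]
    calc _ ≤ ‖dincl y v‖ * ‖w‖ := real_inner_le_norm _ _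
      _ ≤ 1 * ‖w‖ := by gcongr
      _ = ‖w‖ := one_mul _
  have hwn : ‖w‖ ≤ 1 / c0 := by
    have := (hlow y w).trans hqw
    by_cases h0 : ‖w‖ = 0
    · rw [h0]; positivity
    have hp : 0 < ‖w‖ := lt_of_le_of_ne (norm_nonneg _) (Ne.symm h0)
    rw [le_div_iff₀ hc0pos]
    nlinarith
  have hyw : ⟪(y : E3), w⟫ = 0 := by
    have h1 := dincl_orth y v
    rw [← hw, hT, inner_add_right, inner_sum] at h1
    have h2 : ∀ i, ⟪(y : E3), Z i y⟫ = 0 := fun i => dincl_orth y _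
    simp only [inner_smul_right, h2, mul_zero, Finset.sum_const_zero, zero_add] at h1
    rw [real_inner_self_eq_norm_sq, norm_sph] at h1
    simpa using h1
  refine ⟨fun i => ⟪Z i y, w⟫, fun i => ?_, ?_⟩
  · have h1 : ⟪Z i y, w⟫ ^ 2 ≤ q y w := by
      have := Finset.single_le_sum (f := fun i => ⟪Z i y, w⟫ ^ 2) (fun i _ => sq_nonneg _)
        (Finset.mem_univ i)
      simp only [hq]
      nlinarith [sq_nonneg ⟪(y : E3), w⟫]
    have h2 : 0 < 1 / c0 := by positivity
    apply abs_le_of_sq_le_sq _ (by positivity)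
    nlinarith
  · apply dincl_injective y
    rw [← hw, hT, hyw, zero_smul, add_zero, map_sum]
    refine Finset.sum_congr rfl fun i _ => ?_
    rw [map_smul]

theorem exists_perp (x : Sph) : ∃ v : E3, ‖v‖ = 1 ∧ ⟪(x : E3), v⟫ = 0 := by
  have h1 : Module.finrank ℝ (Submodule.span ℝ {(x : E3)})ᗮ = 2 :=
    Submodule.finrank_orthogonal_span_singleton (ne_zero_of_mem_unit_sphere x)
  have : Nontrivial (Submodule.span ℝ {(x : E3)})ᗮ :=
    Module.nontrivial_of_finrank_pos (R := ℝ) (by rw [h1]; norm_num)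
  obtain ⟨w, hw⟩ := exists_ne (0 : (Submodule.span ℝ {(x : E3)})ᗮ)
  have hw' : (w : E3) ≠ 0 := by simpa using hw
  have hn : ‖(w : E3)‖ ≠ 0 := norm_ne_zero_iff.2 hw'
  refine ⟨‖(w : E3)‖⁻¹ • (w : E3), ?_, ?_⟩
  · rw [norm_smul, norm_inv, norm_norm, inv_mul_cancel₀ hn]
  · rw [inner_smul_right, Submodule.mem_orthogonal_singleton_iff_inner_right.1 w.2, mul_zero]

theorem exists_dir (x y : Sph) : ∃ v : E3, ‖v‖ = 1 ∧ ⟪(x : E3), v⟫ = 0 ∧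
    (y : E3) = Real.cos (gdist x y) • (x : E3) + Real.sin (gdist x y) • v := by
  set c := ⟪(x : E3), (y : E3)⟫ with hc
  have hcos : Real.cos (gdist x y) = c :=
    Real.cos_arccos (inner_sph_mem x y).1 (inner_sph_mem x y).2
  have hsin : Real.sin (gdist x y) = Real.sqrt (1 - c ^ 2) := Real.sin_arccos _
  set w : E3 := (y : E3) - c • (x : E3) with hw
  have hwx : ⟪(x : E3), w⟫ = 0 := by
    rw [hw, inner_sub_right, inner_smul_right, real_inner_self_eq_norm_sq, norm_sph, ← hc]; ring
  have hwn : ‖w‖ ^ 2 = 1 - c ^ 2 := by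
    rw [hw, norm_sub_sq_real, norm_smul, norm_sph, norm_sph, inner_smul_right, real_inner_comm,
      ← hc, mul_one, Real.norm_eq_abs, sq_abs]; ring
  have hsw : Real.sin (gdist x y) = ‖w‖ := by
    rw [hsin, ← hwn, Real.sqrt_sq (norm_nonneg _)]
  rw [hcos, hsw]
  by_cases h0 : w = 0
  · obtain ⟨v, hv, hv'⟩ := exists_perp x
    refine ⟨v, hv, hv', ?_⟩
    rw [h0, norm_zero, zero_smul, add_zero, ← sub_eq_zero]; exact h0
  · have hn : ‖w‖ ≠ 0 := norm_ne_zero_iff.2 h0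
    refine ⟨‖w‖⁻¹ • w, ?_, ?_, ?_⟩
    · rw [norm_smul, norm_inv, norm_norm, inv_mul_cancel₀ hn]
    · rw [inner_smul_right, hwx, mul_zero]
    · rw [smul_smul, mul_inv_cancel₀ hn, one_smul, hw]; abel

theorem hasDerivAt_comp_curve {V : Type*} [NormedAddCommGroup V] [NormedSpace ℝ V]
    {f : Sph → V} {γ : ℝ → Sph} {τ : ℝ} (hf : MDifferentiableAt (𝓡 2) 𝓘(ℝ, V) f (γ τ))
    (hγ : MDifferentiableAt 𝓘(ℝ, ℝ) (𝓡 2) γ τ) :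
    HasDerivAt (fun s => f (γ s))
      (mvfderiv (𝓡 2) f (γ τ) (mfderiv 𝓘(ℝ, ℝ) (𝓡 2) γ τ (1 : ℝ))) τ := by
  have h := (hf.hasMFDerivAt.comp τ hγ.hasMFDerivAt)
  have h2 : HasFDerivAt (fun s => f (γ s))
      ((mvfderiv (𝓡 2) f (γ τ)).comp (mfderiv 𝓘(ℝ, ℝ) (𝓡 2) γ τ) : ℝ →L[ℝ] V) τ :=
    h.hasFDerivAt
  exact h2.hasDerivAt

theorem exists_curve {ι : Type*} [Fintype ι] (X : ι → (x : Sph) → TangentSpace (𝓡 2) x)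
    (hX : ∀ i, Continuous (fun x => (⟨x, X i x⟩ : TangentBundle (𝓡 2) Sph)))
    (hXspan : ∀ x : Sph, Submodule.span ℝ (Set.range fun i => X i x) = ⊤) :
    ∃ C : ℝ, 0 < C ∧ ∀ x y : Sph, ∃ γ : ℝ → Sph, γ 0 = x ∧ γ (gdist x y) = y ∧
      ∀ f : Sph → ℂ, ContMDiff (𝓡 2) 𝓘(ℝ, ℂ) 1 f → ∀ τ : ℝ, ∃ f' : ℂ,
        HasDerivAt (fun s => f (γ s)) f' τ ∧
        ‖f'‖ ≤ C * ∑ i, ‖mderivApplyS f (γ τ) (X i (γ τ))‖ := by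
  obtain ⟨C, hC, hcoef⟩ := exists_coef X hX hXspan
  refine ⟨C, hC, fun x y => ?_⟩
  obtain ⟨v, hv, hxv, hy⟩ := exists_dir x y
  have hmem : ∀ τ : ℝ, Real.cos τ • (x : E3) + Real.sin τ • v ∈ Metric.sphere (0 : E3) 1 := by
    intro τ
    rw [mem_sphere_zero_iff_norm]
    have : ‖Real.cos τ • (x : E3) + Real.sin τ • v‖ ^ 2 = 1 := by
      rw [norm_add_sq_real, norm_smul, norm_smul, inner_smul_left, inner_smul_right, hxv, hv,
        norm_sph]
      simp
    nlinarith [norm_nonneg (Real.cos τ • (x : E3) + Real.sin τ • v)]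
  have hcd : ContDiff ℝ 1 (fun τ : ℝ => Real.cos τ • (x : E3) + Real.sin τ • v) :=
    (Real.contDiff_cos.smul contDiff_const).add (Real.contDiff_sin.smul contDiff_const)
  let γ : ℝ → Sph := Set.codRestrict _ _ hmem
  have hγ : ContMDiff 𝓘(ℝ, ℝ) (𝓡 2) 1 γ := ContMDiff.codRestrict_sphere hcd.contMDiff hmem
  have hγv : ∀ τ, (γ τ : E3) = Real.cos τ • (x : E3) + Real.sin τ • v := fun τ => rfl
  refine ⟨γ, ?_, ?_, fun f hf τ => ?_⟩
  · apply Subtype.ext; rw [hγv]; simp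
  · apply Subtype.ext; rw [hγv, ← hy]
  have hγd : MDifferentiableAt 𝓘(ℝ, ℝ) (𝓡 2) γ τ := hγ.mdifferentiableAt one_ne_zero
  refine ⟨_, hasDerivAt_comp_curve (hf.mdifferentiableAt one_ne_zero) hγd, ?_⟩
  have h1 : HasDerivAt (fun s => (γ s : E3))
      (dincl (γ τ) (mfderiv 𝓘(ℝ, ℝ) (𝓡 2) γ τ (1 : ℝ))) τ :=
    hasDerivAt_comp_curve (contMDiff_coe_sphere.mdifferentiableAt (one_ne_zero)) hγd
  have h2 : HasDerivAt (fun s => (γ s : E3)) ((-Real.sin τ) • (x : E3) + Real.cos τ • v) τ := by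
    simp only [hγv]
    exact ((Real.hasDerivAt_cos τ).smul_const _).add ((Real.hasDerivAt_sin τ).smul_const _)
  have h3 := h1.unique h2
  have h4 : ‖dincl (γ τ) (mfderiv 𝓘(ℝ, ℝ) (𝓡 2) γ τ (1 : ℝ))‖ ≤ 1 := by
    rw [h3]
    have : ‖(-Real.sin τ) • (x : E3) + Real.cos τ • v‖ ^ 2 = 1 := by
      rw [norm_add_sq_real, norm_smul, norm_smul, inner_smul_left, inner_smul_right, hxv, hv,
        norm_sph]
      simp
    nlinarith [norm_nonneg ((-Real.sin τ) • (x : E3) + Real.cos τ • v)]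
  obtain ⟨c, hc, hvc⟩ := hcoef (γ τ) _ h4
  rw [hvc, map_sum, Finset.mul_sum]
  refine (norm_sum_le _ _).trans (Finset.sum_le_sum fun i _ => ?_)
  rw [map_smul, norm_smul, Real.norm_eq_abs]
  exact mul_le_mul_of_nonneg_right (hc i) (norm_nonneg _)

/-- Summed mean value inequality. -/
theorem exists_mvt {ι : Type*} [Fintype ι] (X : ι → (x : Sph) → TangentSpace (𝓡 2) x)
    (hX : ∀ i, Continuous (fun x => (⟨x, X i x⟩ : TangentBundle (𝓡 2) Sph)))
    (hXspan : ∀ x : Sph, Submodule.span ℝ (Set.range fun i => X i x) = ⊤) :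
    ∃ C : ℝ, 0 < C ∧ ∀ (n : ℕ) (m : Fin n → ℝ) (f : Fin n → Sph → ℂ) (M : ℝ),
      (∀ k, 0 ≤ m k) → (∀ k, ContMDiff (𝓡 2) 𝓘(ℝ, ℂ) 1 (f k)) →
      (∀ z, ∑ k, m k * ∑ i, ‖mderivApplyS (f k) z (X i z)‖ ≤ M) →
      ∀ x y, ∑ k, m k * ‖f k y - f k x‖ ≤ C * M * gdist x y := by
  obtain ⟨C, hC, hcur⟩ := exists_curve X hX hXspan
  refine ⟨C, hC, fun n m f M hm hf hM x y => ?_⟩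
  obtain ⟨γ, h0, h1, hγ⟩ := hcur x y
  have hε : ∀ k, ∃ ε : ℂ, ‖ε‖ = 1 ∧ ε * (f k y - f k x) = (‖f k y - f k x‖ : ℂ) := by
    intro k
    by_cases hz : f k y - f k x = 0
    · exact ⟨1, by simp, by simp [hz]⟩
    · refine ⟨(‖f k y - f k x‖ : ℂ) / (f k y - f k x), ?_, div_mul_cancel₀ _ hz⟩
      rw [norm_div, Complex.norm_real, norm_norm, div_self (norm_ne_zero_iff.2 hz)]
  choose ε hε1 hε2 using hε
  choose f' hf' hfb using fun k => hγ (f k) (hf k)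
  have hder : ∀ τ, HasDerivAt (fun s => ∑ k, (m k : ℂ) * ε k * f k (γ s))
      (∑ k, (m k : ℂ) * ε k * f' k τ) τ := by
    intro τ
    exact HasDerivAt.fun_sum fun k _ => (hf' k τ).const_mul _
  have hbd : ∀ τ, ‖∑ k, (m k : ℂ) * ε k * f' k τ‖ ≤ C * M := by
    intro τ
    refine (norm_sum_le _ _).trans ?_
    calc _ ≤ ∑ k, C * (m k * ∑ i, ‖mderivApplyS (f k) (γ τ) (X i (γ τ))‖) := by
          refine Finset.sum_le_sum fun k _ => ?_
          rw [norm_mul, norm_mul, hε1, mul_one, Complex.norm_real, Real.norm_of_nonneg (hm k)]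
          calc _ ≤ m k * (C * ∑ i, ‖mderivApplyS (f k) (γ τ) (X i (γ τ))‖) :=
                mul_le_mul_of_nonneg_left (hfb k τ) (hm k)
            _ = _ := by ring
      _ ≤ C * M := by rw [← Finset.mul_sum]; exact mul_le_mul_of_nonneg_left (hM _) hC.le
  have hmv := norm_image_sub_le_of_norm_deriv_le_segment_01'
    (f := fun s => ∑ k, (m k : ℂ) * ε k * f k (γ (s * gdist x y)))
    (f' := fun s => (∑ k, (m k : ℂ) * ε k * f' k (s * gdist x y)) * (gdist x y : ℂ))
    (C := C * M * gdist x y)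
    (fun s _ => by
      have hd : HasDerivAt (fun s : ℝ => s * gdist x y) (gdist x y) s := by
        simpa using (hasDerivAt_id s).mul_const (gdist x y)
      have := HasDerivAt.scomp s (hder (s * gdist x y)) hd
      have e : (gdist x y) • (∑ k, (m k : ℂ) * ε k * f' k (s * gdist x y)) =
          (∑ k, (m k : ℂ) * ε k * f' k (s * gdist x y)) * (gdist x y : ℂ) := by
        rw [Complex.real_smul, mul_comm]
      rw [e] at this
      exact this.hasDerivWithinAt)
    (fun s _ => by
      rw [norm_mul, Complex.norm_real, Real.norm_of_nonneg (gdist_nonneg _ _)]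
      exact mul_le_mul_of_nonneg_right (hbd _) (gdist_nonneg _ _))
  simp only [one_mul, zero_mul, h0, h1] at hmv
  refine le_trans (le_of_eq ?_) hmv
  rw [← Finset.sum_sub_distrib]
  have e : ∑ k, ((m k : ℂ) * ε k * f k y - (m k : ℂ) * ε k * f k x) =
      ((∑ k, m k * ‖f k y - f k x‖ : ℝ) : ℂ) := by
    push_cast
    refine Finset.sum_congr rfl fun k _ => ?_
    rw [← hε2 k]; ring
  rw [e, Complex.norm_real, Real.norm_of_nonneg]
  exact Finset.sum_nonneg fun k _ => mul_nonneg (hm k) (norm_nonneg _)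

end Geom

section Scale

theorem mclass_pointwise {ι : Type*} {X : ι → (x : Sph) → TangentSpace (𝓡 2) x} {x : Sph} {t : ℝ}
    (ht : 0 < t) {φ : Sph → ℂ} (hφ : φ ∈ MClass X x t) (y : Sph) :
    ‖φ y‖ ≤ (t ^ 2)⁻¹ ∧ ‖φ y‖ ≤ 16 / t ^ 2 * Wt t x y ∧
      ‖φ y‖ * gdist x y ≤ 16 / t * Wt t x y ∧
      ∀ i, ‖mderivApplyS φ y (X i y)‖ ≤ 16 / t ^ 3 * Wt t x y := by
  obtain ⟨-, -, h1, h2⟩ := hφ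
  have d1 := decay_aux' (x := x) (y := y) (b := t ^ 2 * ‖φ y‖) ht (by positivity) (by
    intro N hN
    have := h1 y N hN
    linarith)
  refine ⟨?_, ?_, ?_, fun i => ?_⟩
  · have := h1 y 0 (by norm_num)
    rw [pow_zero, one_mul] at this
    rw [← one_div, le_div_iff₀ (by positivity)]; linarith
  · rw [div_mul_eq_mul_div, le_div_iff₀ (by positivity)]; linarith [d1.1]
  · rw [div_mul_eq_mul_div, le_div_iff₀ (by positivity)]
    refine le_trans (le_of_eq ?_) d1.2
    field_simp
  · have d2 := decay_aux' (x := x) (y := y) (b := t ^ 3 * ‖mderivApplyS φ y (X i y)‖) ht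
      (by positivity) (by
        intro N hN
        have := h2 i y N hN
        linarith)
    rw [div_mul_eq_mul_div, le_div_iff₀ (by positivity)]; linarith [d2.1]

theorem scale_bounds {ι : Type*} [Fintype ι] (X : ι → (x : Sph) → TangentSpace (𝓡 2) x)
    (hX : ∀ i, Continuous (fun x => (⟨x, X i x⟩ : TangentBundle (𝓡 2) Sph)))
    (hXspan : ∀ x : Sph, Submodule.span ℝ (Set.range fun i => X i x) = ⊤) :
    ∃ K : ℝ, 0 < K ∧
      (∀ t : ℝ, 0 < t → ∀ (x : Sph) (φ : Sph → ℂ), φ ∈ MClass X x t →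
        ∫ y, ‖φ y‖ ∂sphMeasure ≤ K ∧ ∫ y, ‖φ y‖ * gdist x y ∂sphMeasure ≤ K * t) ∧
      (∀ t : ℝ, 0 < t → ∀ (n : ℕ) (E : Fin n → Set Sph), (∀ k, MeasurableSet (E k)) →
        (Pairwise fun k k' => Disjoint (E k) (E k')) → (⋃ k, E k) = Set.univ →
        (∀ k, ∀ y ∈ E k, ∀ z ∈ E k, gdist y z < t) →
        ∀ xp : Fin n → Sph, (∀ k, xp k ∈ E k) → ∀ φ : Fin n → Sph → ℂ,
        (∀ k, φ k ∈ MClass X (xp k) t) →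
        (∀ y, ∑ k, (sphMeasure (E k)).toReal * ‖φ k y‖ ≤ K) ∧
        (∀ x y, ∑ k, (sphMeasure (E k)).toReal * ‖φ k y - φ k x‖ ≤ K / t * gdist x y)) := by
  obtain ⟨CW, hCW, hW⟩ := exists_Wt_bound
  obtain ⟨CG, hCG, hG⟩ := exists_mvt X hX hXspan
  set n0 : ℝ := (Fintype.card ι : ℝ) with hn0
  have hn0' : 0 ≤ n0 := by positivity
  have hA : 0 ≤ CG * (n0 * (128 * CW)) := by positivity
  refine ⟨128 * CW + CG * (n0 * (128 * CW)), by positivity, ?_, ?_⟩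
  · intro t ht x φ hφ
    have hc : Continuous φ := hφ.1.continuous
    have hWi := (integrable_cont (continuous_Wt ht x))
    constructor
    · calc ∫ y, ‖φ y‖ ∂sphMeasure ≤ ∫ y, 16 / t ^ 2 * Wt t x y ∂sphMeasure :=
            integral_mono (integrable_cont hc.norm) (hWi.const_mul _)
              fun y => (mclass_pointwise ht hφ y).2.1
        _ = 16 / t ^ 2 * ∫ y, Wt t x y ∂sphMeasure := integral_const_mul _ _
        _ ≤ 16 / t ^ 2 * (CW * t ^ 2) := by gcongr; exact hW t ht x
        _ = 16 * CW := by field_simp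
        _ ≤ _ := by linarith
    · calc ∫ y, ‖φ y‖ * gdist x y ∂sphMeasure ≤ ∫ y, 16 / t * Wt t x y ∂sphMeasure :=
            integral_mono (integrable_cont (hc.norm.mul (continuous_gdist x))) (hWi.const_mul _)
              fun y => (mclass_pointwise ht hφ y).2.2.1
        _ = 16 / t * ∫ y, Wt t x y ∂sphMeasure := integral_const_mul _ _
        _ ≤ 16 / t * (CW * t ^ 2) := by gcongr; exact hW t ht x
        _ = 16 * CW * t := by field_simp
        _ ≤ _ := by gcongr; linarith
  · intro t ht n E hE hd hU hdiam xp hxp φ hφ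
    have hdis : ∀ y, ∑ k, (sphMeasure (E k)).toReal * Wt t (xp k) y ≤ 8 * (CW * t ^ 2) := fun y =>
      (discretize E hE hd hU ht hdiam xp hxp y).trans (by gcongr; exact hW t ht y)
    constructor
    · intro y
      calc ∑ k, (sphMeasure (E k)).toReal * ‖φ k y‖
          ≤ ∑ k, 16 / t ^ 2 * ((sphMeasure (E k)).toReal * Wt t (xp k) y) := by
            refine Finset.sum_le_sum fun k _ => ?_
            calc _ ≤ (sphMeasure (E k)).toReal * (16 / t ^ 2 * Wt t (xp k) y) := by
                  gcongr; exact (mclass_pointwise ht (hφ k) y).2.1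
              _ = _ := by ring
        _ ≤ 16 / t ^ 2 * (8 * (CW * t ^ 2)) := by
            rw [← Finset.mul_sum]; gcongr; exact hdis y
        _ = 128 * CW := by field_simp; norm_num
        _ ≤ _ := by linarith
    · intro x y
      have := hG n (fun k => (sphMeasure (E k)).toReal) φ (n0 * (128 * CW) / t)
        (fun k => ENNReal.toReal_nonneg) (fun k => (hφ k).1.of_le (by simp)) ?_ x y
      · refine this.trans ?_
        have hg := gdist_nonneg x y
        gcongr
        rw [← mul_div_assoc]
        gcongr
        linarith
      · intro z
        calc ∑ k, (sphMeasure (E k)).toReal * ∑ i, ‖mderivApplyS (φ k) z (X i z)‖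
            ≤ ∑ k, n0 * (16 / t ^ 3) * ((sphMeasure (E k)).toReal * Wt t (xp k) z) := by
              refine Finset.sum_le_sum fun k _ => ?_
              calc _ ≤ (sphMeasure (E k)).toReal * ∑ i : ι, (16 / t ^ 3 * Wt t (xp k) z) := by
                    gcongr with i
                    exact (mclass_pointwise ht (hφ k) z).2.2.2 i
                _ = _ := by
                    rw [Finset.sum_const, Finset.card_univ, nsmul_eq_mul, ← hn0]; ring
          _ ≤ n0 * (16 / t ^ 3) * (8 * (CW * t ^ 2)) := by
              rw [← Finset.mul_sum]; gcongr; exact hdis z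
          _ = _ := by field_simp; ring

theorem sphInner_sub_const {F φ : Sph → ℂ} (hF : Continuous F) (hφ : Continuous φ)
    (h0 : ∫ y, φ y ∂sphMeasure = 0) (x : Sph) :
    ‖sphInner F φ‖ ≤ ∫ y, ‖F y - F x‖ * ‖φ y‖ ∂sphMeasure := by
  have hcc : Continuous fun y => (starRingEnd ℂ) (φ y) := Complex.continuous_conj.comp hφ
  have h1 : sphInner F φ = ∫ y, (F y - F x) * (starRingEnd ℂ) (φ y) ∂sphMeasure := by
    have : ∫ y, F x * (starRingEnd ℂ) (φ y) ∂sphMeasure = 0 := by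
      rw [integral_const_mul, integral_conj, h0, map_zero, mul_zero]
    unfold sphInner
    simp only [sub_mul]
    rw [integral_sub (f := fun y => F y * (starRingEnd ℂ) (φ y))
      (g := fun y => F x * (starRingEnd ℂ) (φ y)) (integrable_cont (hF.mul hcc))
      (integrable_cont (continuous_const.mul hcc)), this, sub_zero]
  rw [h1]
  refine (norm_integral_le_integral_norm _).trans (le_of_eq ?_)
  simp only [norm_mul, RCLike.norm_conj]

theorem sphInner_le {F φ : Sph → ℂ} :
    ‖sphInner F φ‖ ≤ ∫ y, ‖F y‖ * ‖φ y‖ ∂sphMeasure := by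
  unfold sphInner
  refine (norm_integral_le_integral_norm _).trans (le_of_eq ?_)
  simp only [norm_mul, RCLike.norm_conj]

/-- Row sums at a single scale. -/
theorem cross_bound {n : ℕ} (m : Fin n → ℝ) (hm : ∀ k, 0 ≤ m k) (f : Fin n → Sph → ℂ)
    (hf : ∀ k, Continuous (f k)) {φ : Sph → ℂ} (hφ : Continuous φ)
    (h0 : ∫ y, φ y ∂sphMeasure = 0) (x : Sph) {K s t : ℝ} (hK : 0 < K) (hs : 0 < s)
    (hφ1 : ∫ y, ‖φ y‖ ∂sphMeasure ≤ K) (hφ2 : ∫ y, ‖φ y‖ * gdist x y ∂sphMeasure ≤ K * t)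
    (hf1 : ∀ y, ∑ k, m k * ‖f k y‖ ≤ K)
    (hf2 : ∀ y, ∑ k, m k * ‖f k y - f k x‖ ≤ K / s * gdist x y) :
    ∑ k, m k * ‖sphInner (f k) φ‖ ≤ K ^ 2 ∧ ∑ k, m k * ‖sphInner (f k) φ‖ ≤ K ^ 2 * (t / s) := by
  have gen : ∀ (g : Fin n → Sph → ℝ), (∀ k, Continuous (g k)) →
      (∀ k, ‖sphInner (f k) φ‖ ≤ ∫ y, g k y * ‖φ y‖ ∂sphMeasure) →
      ∑ k, m k * ‖sphInner (f k) φ‖ ≤ ∫ y, (∑ k, m k * g k y) * ‖φ y‖ ∂sphMeasure := by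
    intro g hg h
    calc _ ≤ ∑ k, m k * ∫ y, g k y * ‖φ y‖ ∂sphMeasure := by
          refine Finset.sum_le_sum fun k _ => mul_le_mul_of_nonneg_left (h k) (hm k)
      _ = ∑ k, ∫ y, m k * (g k y * ‖φ y‖) ∂sphMeasure := by simp only [integral_const_mul]
      _ = ∫ y, ∑ k, m k * (g k y * ‖φ y‖) ∂sphMeasure := by
          rw [integral_finsetSum]
          intro k _
          exact integrable_cont (continuous_const.mul ((hg k).mul hφ.norm))
      _ = _ := by
          congr 1; ext y; rw [Finset.sum_mul]
          exact Finset.sum_congr rfl fun k _ => by ring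
  constructor
  · refine (gen (fun k y => ‖f k y‖) (fun k => (hf k).norm) fun k => sphInner_le).trans ?_
    calc _ ≤ ∫ y, K * ‖φ y‖ ∂sphMeasure := by
          refine integral_mono (integrable_cont ?_) (integrable_cont ?_) fun y => ?_
          · exact (continuous_finsetSum _ fun k _ => continuous_const.mul (hf k).norm).mul hφ.norm
          · exact continuous_const.mul hφ.norm
          · exact mul_le_mul_of_nonneg_right (hf1 y) (norm_nonneg _)
      _ = K * ∫ y, ‖φ y‖ ∂sphMeasure := integral_const_mul _ _
      _ ≤ K * K := by gcongr
      _ = K ^ 2 := by ring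
  · refine (gen (fun k y => ‖f k y - f k x‖) (fun k => ((hf k).sub continuous_const).norm)
      fun k => sphInner_sub_const (hf k) hφ h0 x).trans ?_
    calc _ ≤ ∫ y, K / s * (‖φ y‖ * gdist x y) ∂sphMeasure := by
          refine integral_mono (integrable_cont ?_) (integrable_cont ?_) fun y => ?_
          · exact (continuous_finsetSum _ fun k _ =>
              continuous_const.mul ((hf k).sub continuous_const).norm).mul hφ.norm
          · exact continuous_const.mul (hφ.norm.mul (continuous_gdist x))
          · refine (mul_le_mul_of_nonneg_right (hf2 y) (norm_nonneg _)).trans (le_of_eq ?_)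
            ring
      _ = K / s * ∫ y, ‖φ y‖ * gdist x y ∂sphMeasure := integral_const_mul _ _
      _ ≤ K / s * (K * t) := by gcongr
      _ = K ^ 2 * (t / s) := by ring

theorem sigma_sum_le {N : ℤ → ℕ} (g : ((j : ℤ) × Fin (N j)) → ℝ) (h0 : ∀ p, 0 ≤ g p)
    (B : ℤ → ℝ) (hB : Summable B) (hg : ∀ j, ∑ k, g ⟨j, k⟩ ≤ B j)
    (s : Finset ((j : ℤ) × Fin (N j))) : ∑ p ∈ s, g p ≤ ∑' j, B j := by
  have hs := sigma_summable g h0 B hB hg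
  refine (hs.sum_le_tsum s fun p _ => h0 p).trans ?_
  rw [hs.tsum_sigma]
  refine Summable.tsum_le_tsum (fun j => ?_) hs.sigma hB
  rw [tsum_fintype]; exact hg j

theorem zpow_aux {b : ℝ} (hb : 1 < b) (j i : ℤ) {K2 A : ℝ}
    (h1 : A ≤ K2) (h2 : A ≤ K2 * ((b ^ j) ^ 2 / (b ^ i) ^ 2)) :
    b ^ i * A ≤ K2 * b ^ j * (b⁻¹) ^ (i - j).natAbs := by
  have hb0 : 0 < b := by linarith
  rcases le_total i j with h | h
  · have e : (b⁻¹) ^ (i - j).natAbs = b ^ (i - j) := by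
      rw [inv_pow, ← zpow_natCast, ← zpow_neg]
      congr 1; omega
    rw [e, zpow_sub₀ hb0.ne']
    calc b ^ i * A ≤ b ^ i * K2 := by gcongr
      _ = _ := by
        have : b ^ j ≠ 0 := (zpow_pos hb0 j).ne'
        field_simp
  · have e : (b⁻¹) ^ (i - j).natAbs = b ^ (j - i) := by
      rw [inv_pow, ← zpow_natCast, ← zpow_neg]
      congr 1; omega
    rw [e, zpow_sub₀ hb0.ne']
    calc b ^ i * A ≤ b ^ i * (K2 * ((b ^ j) ^ 2 / (b ^ i) ^ 2)) := by gcongr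
      _ = _ := by
        have : b ^ i ≠ 0 := (zpow_pos hb0 i).ne'
        field_simp

theorem memLp_cont {f : Sph → ℂ} (hf : Continuous f) : MemLp f 2 sphMeasure := by
  obtain ⟨C, hC⟩ := isCompact_univ.exists_bound_of_continuousOn hf.continuousOn
  exact MemLp.of_bound hf.aestronglyMeasurable C
    (Filter.Eventually.of_forall fun x => hC x (Set.mem_univ x))

theorem inner_toLp {f g : Sph → ℂ} (hf : MemLp f 2 sphMeasure) (hg : MemLp g 2 sphMeasure) :
    inner ℂ (hf.toLp f) (hg.toLp g) = sphInner g f := by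
  rw [MeasureTheory.L2.inner_def]
  unfold sphInner
  refine integral_congr_ae ?_
  filter_upwards [hf.coeFn_toLp, hg.coeFn_toLp] with y h1 h2
  rw [h1, h2]; rfl

theorem ae_of_hasSum {P : Type*} [Countable P] (g : P → Sph → ℂ)
    (hg : ∀ p, MemLp (g p) 2 sphMeasure) (S : Lp ℂ 2 sphMeasure)
    (hS : HasSum (fun p => (hg p).toLp (g p)) S) (f : Sph → ℂ)
    (hf : ∀ x, HasSum (fun p => g p x) (f x)) : (S : Sph → ℂ) =ᵐ[sphMeasure] f := by
  have h1 := tendstoInMeasure_of_tendsto_Lp hS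
  obtain ⟨ns, hns, hae⟩ := h1.exists_seq_tendsto_ae'
  have h2 : ∀ᵐ x ∂sphMeasure, ∀ p, ((hg p).toLp (g p) : Sph → ℂ) x = g p x :=
    ae_all_iff.2 fun p => (hg p).coeFn_toLp
  have h3 : ∀ᵐ x ∂sphMeasure, ∀ s : Finset P, ((∑ p ∈ s, (hg p).toLp (g p) : Lp ℂ 2 sphMeasure) :
      Sph → ℂ) x = ∑ p ∈ s, ((hg p).toLp (g p) : Sph → ℂ) x := by
    refine ae_all_iff.2 fun s => ?_
    filter_upwards [Lp.coeFn_finsetSum s fun p => (hg p).toLp (g p)] with x hx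
    rw [hx, Finset.sum_apply]
  filter_upwards [hae, h2, h3] with x hx1 hx2 hx3
  refine tendsto_nhds_unique hx1 ?_
  simp only [hx3, hx2]
  exact (hf x).comp hns

end Scale

section Final

/-- The Bessel inequality for a multiscale family. -/
theorem bessel_family {ι : Type*} [Fintype ι] {X : ι → (x : Sph) → TangentSpace (𝓡 2) x}
    {K : ℝ} (hK : 0 < K)
    (hK1 : ∀ t : ℝ, 0 < t → ∀ (x : Sph) (φ : Sph → ℂ), φ ∈ MClass X x t →
        ∫ y, ‖φ y‖ ∂sphMeasure ≤ K ∧ ∫ y, ‖φ y‖ * gdist x y ∂sphMeasure ≤ K * t)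
    {a : ℝ} (ha : 1 < a) {N : ℤ → ℕ} (m : ((j : ℤ) × Fin (N j)) → ℝ) (hm : ∀ p, 0 ≤ m p)
    (xp : (j : ℤ) → Fin (N j) → Sph) (φ : (j : ℤ) → Fin (N j) → (Sph → ℂ))
    (hφ : ∀ j k, φ j k ∈ MClass X (xp j k) (a ^ j))
    (h1 : ∀ j y, ∑ k, m ⟨j, k⟩ * ‖φ j k y‖ ≤ K)
    (h2 : ∀ j x y, ∑ k, m ⟨j, k⟩ * ‖φ j k y - φ j k x‖ ≤ K / a ^ j * gdist x y)
    (hmem : ∀ p : (j : ℤ) × Fin (N j), MemLp (φ p.1 p.2) 2 sphMeasure)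
    (s : Finset ((j : ℤ) × Fin (N j))) (h : Lp ℂ 2 sphMeasure) :
    ∑ p ∈ s, m p * ‖inner ℂ ((hmem p).toLp (φ p.1 p.2)) h‖ ^ 2 ≤
      (K ^ 2 * ∑' n : ℤ, ((Real.sqrt a)⁻¹) ^ n.natAbs) * ‖h‖ ^ 2 := by
  set b := Real.sqrt a with hb
  have hb1 : 1 < b := by rw [hb, Real.lt_sqrt (by norm_num)]; simpa using ha
  have hb0 : 0 < b := by linarith
  have ha0 : 0 < a := by linarith
  have hab : ∀ j : ℤ, a ^ j = (b ^ j) ^ 2 := by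
    intro j
    rw [← zpow_natCast, ← zpow_mul, mul_comm, zpow_mul, zpow_natCast, hb, Real.sq_sqrt ha0.le]
  have hsum : Summable fun n : ℤ => (b⁻¹) ^ n.natAbs :=
    summable_pow_natAbs _ (by positivity) (inv_lt_one_of_one_lt₀ hb1)
  refine bessel_schur (fun p => (hmem p).toLp (φ p.1 p.2)) m (fun p => b ^ p.1) hm
    (fun p => zpow_pos hb0 _) _ ?_ ?_ s h
  · exact mul_nonneg (sq_nonneg _) (tsum_nonneg fun n => by positivity)
  rintro s ⟨j, k⟩
  simp only [inner_toLp]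
  have hsh : Summable fun i : ℤ => K ^ 2 * b ^ j * (b⁻¹) ^ (i - j).natAbs :=
    ((Equiv.subRight j).summable_iff (f := fun n : ℤ => (b⁻¹) ^ n.natAbs)).2 hsum |>.mul_left _
  have hts : ∑' i : ℤ, K ^ 2 * b ^ j * (b⁻¹) ^ (i - j).natAbs =
      K ^ 2 * (∑' n : ℤ, (b⁻¹) ^ n.natAbs) * b ^ j := by
    have hsft : ∑' i : ℤ, (b⁻¹) ^ (i - j).natAbs = ∑' n : ℤ, (b⁻¹) ^ n.natAbs :=
      (Equiv.subRight j).tsum_eq (fun n : ℤ => (b⁻¹) ^ n.natAbs)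
    rw [tsum_mul_left, hsft]
    ring
  rw [← hts]
  refine sigma_sum_le (fun q : (j : ℤ) × Fin (N j) =>
    m q * b ^ q.1 * ‖sphInner (φ q.1 q.2) (φ j k)‖) (fun q => ?_) _ hsh (fun i => ?_) s
  · exact mul_nonneg (mul_nonneg (hm q) (zpow_pos hb0 _).le) (norm_nonneg _)
  · have htj : 0 < a ^ j := zpow_pos ha0 j
    have hti : 0 < a ^ i := zpow_pos ha0 i
    obtain ⟨k1, k2⟩ := hK1 _ htj _ _ (hφ j k)
    obtain ⟨c1, c2⟩ := cross_bound (fun k' => m ⟨i, k'⟩) (fun k' => hm _) (φ i)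
      (fun k' => (hφ i k').1.continuous) (hφ j k).1.continuous (hφ j k).2.1 (xp j k) hK hti k1 k2
      (h1 i) (fun y => h2 i _ y)
    rw [hab j, hab i] at c2
    refine le_trans (le_of_eq ?_) (zpow_aux hb1 j i c1 c2)
    rw [Finset.mul_sum]
    exact Finset.sum_congr rfl fun k' _ => by ring

/-- Block bounds for `C¹` functions. -/
theorem block_bound_s14 {ι : Type*} [Fintype ι] {X : ι → (x : Sph) → TangentSpace (𝓡 2) x}
    (hX : ∀ i, Continuous (fun x => (⟨x, X i x⟩ : TangentBundle (𝓡 2) Sph)))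
    (hXspan : ∀ x : Sph, Submodule.span ℝ (Set.range fun i => X i x) = ⊤)
    {K : ℝ} (hK : 0 < K)
    (hK1 : ∀ t : ℝ, 0 < t → ∀ (x : Sph) (φ : Sph → ℂ), φ ∈ MClass X x t →
        ∫ y, ‖φ y‖ ∂sphMeasure ≤ K ∧ ∫ y, ‖φ y‖ * gdist x y ∂sphMeasure ≤ K * t)
    {a : ℝ} (ha : 1 < a) {N : ℤ → ℕ} (m : ((j : ℤ) × Fin (N j)) → ℝ) (hm : ∀ p, 0 ≤ m p)
    (xp : (j : ℤ) → Fin (N j) → Sph) (φ ψ : (j : ℤ) → Fin (N j) → (Sph → ℂ))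
    (hφ : ∀ j k, φ j k ∈ MClass X (xp j k) (a ^ j))
    (h1 : ∀ j y, ∑ k, m ⟨j, k⟩ * ‖ψ j k y‖ ≤ K)
    (F : Sph → ℂ) (hF : ContMDiff (𝓡 2) 𝓘(ℝ, ℂ) 1 F) :
    ∃ B : ℤ → ℝ, Summable B ∧ ∀ j x,
      ∑ k, ‖(m ⟨j, k⟩ : ℂ) * sphInner F (φ j k) * ψ j k x‖ ≤ B j := by
  have ha0 : 0 < a := by linarith
  obtain ⟨M, hM⟩ := isCompact_univ.exists_bound_of_continuousOn hF.continuous.continuousOn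
  have hM' : ∀ x, ‖F x‖ ≤ |M| := fun x => (hM x (Set.mem_univ x)).trans (le_abs_self _)
  obtain ⟨C, hC, hmvt⟩ := exists_mvt X hX hXspan
  have hDc : Continuous fun z => ∑ i, ‖mderivApplyS F z (X i z)‖ :=
    continuous_finsetSum _ fun i _ => (continuous_deriv_field hF (hX i)).norm
  obtain ⟨D, hD⟩ := isCompact_univ.exists_bound_of_continuousOn hDc.continuousOn
  have hlip : ∀ x y, ‖F y - F x‖ ≤ C * |D| * gdist x y := by
    intro x y
    have := hmvt 1 (fun _ => 1) (fun _ => F) |D| (fun _ => zero_le_one) (fun _ => hF) (by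
      intro z
      simp only [Finset.univ_unique, Finset.sum_const, Finset.card_singleton, one_smul, one_mul]
      exact (le_abs_self _).trans ((hD z (Set.mem_univ z)).trans (le_abs_self _))) x y
    simpa using this
  set μS : ℝ := sphMeasure.real Set.univ with hμS
  have hμ0 : 0 ≤ μS := measureReal_nonneg
  set L := C * |D| * K + |M| * μS with hL
  have hL1 : 0 ≤ C * |D| * K := by positivity
  have hL2 : 0 ≤ |M| * μS := by positivity
  have hcoef : ∀ j k, ‖sphInner F (φ j k)‖ ≤ L * (a⁻¹) ^ j.natAbs := by
    intro j k
    have htj : 0 < a ^ j := zpow_pos ha0 j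
    have hc := (hφ j k).1.continuous
    rcases le_total j 0 with hj | hj
    · have e : (a⁻¹) ^ j.natAbs = a ^ j := by
        rw [inv_pow, ← zpow_natCast, ← zpow_neg]
        congr 1; omega
      rw [e]
      refine (sphInner_sub_const hF.continuous hc (hφ j k).2.1 (xp j k)).trans ?_
      calc _ ≤ ∫ y, C * |D| * (‖φ j k y‖ * gdist (xp j k) y) ∂sphMeasure := by
            refine integral_mono (integrable_cont ?_) (integrable_cont ?_) fun y => ?_
            · exact (hF.continuous.sub continuous_const).norm.mul hc.norm
            · exact continuous_const.mul (hc.norm.mul (continuous_gdist _))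
            · refine (mul_le_mul_of_nonneg_right (hlip (xp j k) y) (norm_nonneg _)).trans
                (le_of_eq ?_)
              ring
        _ = C * |D| * ∫ y, ‖φ j k y‖ * gdist (xp j k) y ∂sphMeasure := integral_const_mul _ _
        _ ≤ C * |D| * (K * a ^ j) := by
            gcongr; exact (hK1 _ htj _ _ (hφ j k)).2
        _ = C * |D| * K * a ^ j := by ring
        _ ≤ L * a ^ j := by gcongr; linarith
    · have e : (a⁻¹) ^ j.natAbs = (a ^ j)⁻¹ := by
        rw [inv_pow, ← zpow_natCast]
        congr 2; omega
      rw [e]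
      have hone : 1 ≤ a ^ j := one_le_zpow₀ ha.le hj
      refine sphInner_le.trans ?_
      calc _ ≤ ∫ y, |M| * (a ^ j)⁻¹ ∂sphMeasure := by
            refine integral_mono (integrable_cont ?_) (integrable_const _) fun y => ?_
            · exact hF.continuous.norm.mul hc.norm
            · refine mul_le_mul (hM' y) ?_ (norm_nonneg _) (abs_nonneg _)
              refine (mclass_pointwise htj (hφ j k) y).1.trans ?_
              apply inv_anti₀ htj
              nlinarith
        _ = |M| * μS * (a ^ j)⁻¹ := by
            rw [integral_const, smul_eq_mul, ← hμS]; ring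
        _ ≤ L * (a ^ j)⁻¹ := by gcongr; linarith
  refine ⟨fun j => L * K * (a⁻¹) ^ j.natAbs, ?_, fun j x => ?_⟩
  · exact (summable_pow_natAbs _ (by positivity) (inv_lt_one_of_one_lt₀ ha)).mul_left _
  · calc _ ≤ ∑ k, L * (a⁻¹) ^ j.natAbs * (m ⟨j, k⟩ * ‖ψ j k x‖) := by
          refine Finset.sum_le_sum fun k _ => ?_
          rw [norm_mul, norm_mul, Complex.norm_real, Real.norm_of_nonneg (hm _)]
          calc _ ≤ m ⟨j, k⟩ * (L * (a⁻¹) ^ j.natAbs) * ‖ψ j k x‖ := by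
                gcongr
                · exact hm _
                · exact hcoef j k
            _ = _ := by ring
      _ ≤ L * (a⁻¹) ^ j.natAbs * K := by
          rw [← Finset.mul_sum]
          refine mul_le_mul_of_nonneg_left (h1 j x) ?_
          have : 0 ≤ L := by linarith
          positivity
      _ = _ := by ring

end Final

/-- **The summation operator theorem on `S²` (parts (a) and (b)).**
Fix a finite family `𝒫 = {X i}` of smooth vector fields on `S²` spanning the tangent
space at each point, and `a > 1`.  There is `C₂ > 0` such that: for any partitions
`{E_{j,k}}` of `S²` (for `j ∈ ℤ`) into finitely many measurable pieces of geodesic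
diameter `< a^j`, points `x_{j,k} ∈ E_{j,k}` and `φ_{j,k}, ψ_{j,k} ∈ ℳ_{x_{j,k},a^j}`,
for every `F ∈ C¹(S²)`: (a) the series `SF = ∑_{j,k} μ(E_{j,k})⟨F,φ_{j,k}⟩ψ_{j,k}`
converges absolutely, uniformly on `S²`, and (b) `‖SF‖₂ ≤ C₂‖F‖₂`; consequently `S`
extends to a bounded operator on `L²(S²)` of norm at most `C₂`. -/
theorem statement_14
    (ι : Type*) [Fintype ι] (X : ι → (x : Sph) → TangentSpace (𝓡 2) x)
    (hXsmooth : ∀ i, ContMDiff (𝓡 2) (𝓡 2).tangent (⊤ : ℕ∞)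
      (fun x => (⟨x, X i x⟩ : TangentBundle (𝓡 2) Sph)))
    (hXspan : ∀ x : Sph, Submodule.span ℝ (Set.range fun i => X i x) = ⊤)
    (a : ℝ) (ha : 1 < a) :
    ∃ C₂ : ℝ, 0 < C₂ ∧
      ∀ (N : ℤ → ℕ) (E : (j : ℤ) → Fin (N j) → Set Sph),
        (∀ j k, MeasurableSet (E j k)) →
        (∀ j, Pairwise fun k k' => Disjoint (E j k) (E j k')) →
        (∀ j, (⋃ k, E j k) = Set.univ) →
        (∀ j k, ∀ y ∈ E j k, ∀ z ∈ E j k, gdist y z < a ^ j) →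
        ∀ (xp : (j : ℤ) → Fin (N j) → Sph), (∀ j k, xp j k ∈ E j k) →
        ∀ (φ ψ : (j : ℤ) → Fin (N j) → (Sph → ℂ)),
          (∀ j k, φ j k ∈ MClass X (xp j k) (a ^ j)) →
          (∀ j k, ψ j k ∈ MClass X (xp j k) (a ^ j)) →
        ∀ F : Sph → ℂ, ContMDiff (𝓡 2) 𝓘(ℝ, ℂ) 1 F →
          -- (a) absolute convergence, uniform on the sphere
          ((∀ x : Sph, Summable fun p : (j : ℤ) × Fin (N j) =>
              ‖(sphMeasure (E p.1 p.2)).toReal * sphInner F (φ p.1 p.2) *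
                ψ p.1 p.2 x‖) ∧
            TendstoUniformly
              (fun (s : Finset ((j : ℤ) × Fin (N j))) (x : Sph) =>
                ∑ p ∈ s, ‖(sphMeasure (E p.1 p.2)).toReal * sphInner F (φ p.1 p.2) *
                  ψ p.1 p.2 x‖)
              (fun x : Sph => ∑' p : (j : ℤ) × Fin (N j),
                ‖(sphMeasure (E p.1 p.2)).toReal * sphInner F (φ p.1 p.2) *
                  ψ p.1 p.2 x‖)
              Filter.atTop) ∧
          -- (b) the L² bound
          (eLpNorm (fun x : Sph => ∑' p : (j : ℤ) × Fin (N j),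
              (sphMeasure (E p.1 p.2)).toReal * sphInner F (φ p.1 p.2) * ψ p.1 p.2 x)
              2 sphMeasure ≤
            ENNReal.ofReal C₂ * eLpNorm F 2 sphMeasure) ∧
          -- consequently `S` extends to a bounded operator on `L²(S²)`
          (∃ Sbar : Lp ℂ 2 sphMeasure →L[ℂ] Lp ℂ 2 sphMeasure,
            ‖Sbar‖ ≤ C₂ ∧
            ∀ G : Sph → ℂ, ContMDiff (𝓡 2) 𝓘(ℝ, ℂ) 1 G →
              ∀ hm : MemLp G 2 sphMeasure,
                (Sbar (hm.toLp G) : Sph → ℂ) =ᵐ[sphMeasure]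
                  fun x : Sph => ∑' p : (j : ℤ) × Fin (N j),
                    (sphMeasure (E p.1 p.2)).toReal * sphInner G (φ p.1 p.2) *
                      ψ p.1 p.2 x) := by
  have hX : ∀ i, Continuous (fun x => (⟨x, X i x⟩ : TangentBundle (𝓡 2) Sph)) :=
    fun i => (hXsmooth i).continuous
  have ha0 : 0 < a := by linarith
  obtain ⟨K, hK, hK1, hK2⟩ := scale_bounds X hX hXspan
  set D : ℝ := ∑' n : ℤ, ((Real.sqrt a)⁻¹) ^ n.natAbs with hD
  have hD0 : 0 ≤ D := tsum_nonneg fun n => by positivity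
  refine ⟨K ^ 2 * D + 1, by positivity, ?_⟩
  intro N E hE hdis hU hdiam xp hxp φ ψ hφ hψ F hF
  set m : ((j : ℤ) × Fin (N j)) → ℝ := fun p => (sphMeasure (E p.1 p.2)).toReal with hm
  have hm0 : ∀ p, 0 ≤ m p := fun p => ENNReal.toReal_nonneg
  have hsφ := fun j => hK2 (a ^ j) (zpow_pos ha0 j) (N j) (E j) (hE j) (hdis j) (hU j) (hdiam j)
    (xp j) (hxp j) (φ j) (hφ j)
  have hsψ := fun j => hK2 (a ^ j) (zpow_pos ha0 j) (N j) (E j) (hE j) (hdis j) (hU j) (hdiam j)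
    (xp j) (hxp j) (ψ j) (hψ j)
  have hmφ : ∀ p : (j : ℤ) × Fin (N j), MemLp (φ p.1 p.2) 2 sphMeasure :=
    fun p => memLp_cont (hφ p.1 p.2).1.continuous
  have hmψ : ∀ p : (j : ℤ) × Fin (N j), MemLp (ψ p.1 p.2) 2 sphMeasure :=
    fun p => memLp_cont (hψ p.1 p.2).1.continuous
  have hblock : ∀ G : Sph → ℂ, ContMDiff (𝓡 2) 𝓘(ℝ, ℂ) 1 G → ∃ B : ℤ → ℝ, Summable B ∧ ∀ j x,
      ∑ k, ‖(m ⟨j, k⟩ : ℂ) * sphInner G (φ j k) * ψ j k x‖ ≤ B j := fun G hG =>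
    block_bound_s14 hX hXspan hK hK1 ha m hm0 xp φ ψ hφ (fun j => (hsψ j).1) G hG
  have hsummable : ∀ G : Sph → ℂ, ContMDiff (𝓡 2) 𝓘(ℝ, ℂ) 1 G → ∀ x, Summable
      fun p : (j : ℤ) × Fin (N j) => ‖(m p : ℂ) * sphInner G (φ p.1 p.2) * ψ p.1 p.2 x‖ := by
    intro G hG x
    obtain ⟨B, hB, hB'⟩ := hblock G hG
    exact sigma_summable _ (fun p => norm_nonneg _) B hB fun j => hB' j x
  obtain ⟨S, hS, hSsum⟩ := exists_sum_operator
    (fun p : (j : ℤ) × Fin (N j) => (hmφ p).toLp (φ p.1 p.2))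
    (fun p => (hmψ p).toLp (ψ p.1 p.2)) m hm0 (K ^ 2 * D) (by positivity)
    (bessel_family hK hK1 ha m hm0 xp φ hφ (fun j => (hsφ j).1) (fun j => (hsφ j).2) hmφ)
    (bessel_family hK hK1 ha m hm0 xp ψ hψ (fun j => (hsψ j).1) (fun j => (hsψ j).2) hmψ)
  have hext : ∀ G : Sph → ℂ, ContMDiff (𝓡 2) 𝓘(ℝ, ℂ) 1 G → ∀ hG : MemLp G 2 sphMeasure,
      (S (hG.toLp G) : Sph → ℂ) =ᵐ[sphMeasure] fun x : Sph => ∑' p : (j : ℤ) × Fin (N j),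
        (m p : ℂ) * sphInner G (φ p.1 p.2) * ψ p.1 p.2 x := by
    intro G hG hGm
    refine ae_of_hasSum (fun p x => (m p : ℂ) * sphInner G (φ p.1 p.2) * ψ p.1 p.2 x)
      (fun p => (hmψ p).const_mul _) _ ?_ _ fun x => (hsummable G hG x).of_norm.hasSum
    have := hSsum (hGm.toLp G)
    simp only [inner_toLp] at this
    exact this
  have hS1 : ‖S‖ ≤ K ^ 2 * D + 1 := by linarith
  refine ⟨⟨hsummable F hF, ?_⟩, ?_, S, hS1, hext⟩
  · obtain ⟨B, hB, hB'⟩ := hblock F hF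
    exact sigma_uniform
      (fun p x => ‖(m p : ℂ) * sphInner F (φ p.1 p.2) * ψ p.1 p.2 x‖)
      (fun p x => norm_nonneg _) B hB hB'
  · have hFm : MemLp F 2 sphMeasure := memLp_cont hF.continuous
    rw [← eLpNorm_congr_ae (hext F hF hFm)]
    have h1 : ‖S (hFm.toLp F)‖ ≤ (K ^ 2 * D + 1) * ‖hFm.toLp F‖ := S.le_of_opNorm_le hS1 _
    rw [Lp.norm_toLp, Lp.norm_def] at h1
    rw [← ENNReal.ofReal_toReal (Lp.eLpNorm_ne_top (S (hFm.toLp F))),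
      ← ENNReal.ofReal_toReal hFm.eLpNorm_ne_top, ← ENNReal.ofReal_mul (by positivity)]
    exact ENNReal.ofReal_le_ofReal h1
end
end
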